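/- arXiv:1412.2267 — 3 statements merged into one kernel-verified Lean document; each statement's English description precedes it below -/
import Mathlib

section
/- The equivalence relation on generalized rectangular diagrams generated by the elementary moves of type L (cyclic permutations, commutations, stabilizations and destabilizations of type L, end shifts of type L, and vertex additions) coincides with the equivalence relation generated by commutations, end shifts of type L and vertex additions alone. -/
namespace RectDiag

/-- A generalized rectangular diagram: a finite subset of `ℝ²`, whose elements are
called the vertices of the diagram. -/
abbrev GRD := Finset (ℝ × ℝ)

/-- Two diagrams are combinatorially equivalent (and hence identified) if one maps onto
the other under `(x, y) ↦ (f x, g y)` for some strictly increasing `f g : ℝ → ℝ`. -/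
def CombEquiv (R R' : GRD) : Prop :=
  ∃ f g : ℝ → ℝ, StrictMono f ∧ StrictMono g ∧
    R' = R.image fun p => (f p.1, g p.2)

/-- Move every vertex on the vertical line `x = a` to the vertical line `x = b`. -/
noncomputable def moveCol (R : GRD) (a b : ℝ) : GRD :=
  R.image fun p => if p.1 = a then (b, p.2) else p

/-- Move every vertex on the horizontal line `y = a` to the horizontal line `y = b`. -/
noncomputable def moveRow (R : GRD) (a b : ℝ) : GRD :=
  R.image fun p => if p.2 = a then (p.1, b) else p

/-- Cyclic permutation: an extreme (rightmost, leftmost, top or bottom) edge is moved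
to the opposite side of the diagram; only the coordinate perpendicular to the edge
changes. -/
def CyclicPermutation (R R' : GRD) : Prop :=
  (∃ a b : ℝ, (∃ p ∈ R, p.1 = a) ∧
    (((∀ p ∈ R, p.1 ≤ a) ∧ ∀ p ∈ R, b < p.1) ∨
     ((∀ p ∈ R, a ≤ p.1) ∧ ∀ p ∈ R, p.1 < b)) ∧
    R' = moveCol R a b) ∨
  (∃ a b : ℝ, (∃ p ∈ R, p.2 = a) ∧
    (((∀ p ∈ R, p.2 ≤ a) ∧ ∀ p ∈ R, b < p.2) ∨
     ((∀ p ∈ R, a ≤ p.2) ∧ ∀ p ∈ R, p.2 < b)) ∧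
    R' = moveRow R a b)

/-- Two sets of reals interleave in the cyclic order: their elements alternate
`a₁ < b₁ < a₂ < b₂` (or with the roles of the two sets exchanged). -/
def Interleave (A B : ℝ → Prop) : Prop :=
  (∃ a₁, A a₁ ∧ ∃ b₁, B b₁ ∧ ∃ a₂, A a₂ ∧ ∃ b₂, B b₂ ∧ a₁ < b₁ ∧ b₁ < a₂ ∧ a₂ < b₂) ∨
  (∃ b₁, B b₁ ∧ ∃ a₁, A a₁ ∧ ∃ b₂, B b₂ ∧ ∃ a₂, A a₂ ∧ b₁ < a₁ ∧ a₁ < b₂ ∧ b₂ < a₂)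

/-- Exchange the vertical lines `x = a` and `x = b` of a diagram. -/
noncomputable def swapCols (R : GRD) (a b : ℝ) : GRD :=
  R.image fun p => if p.1 = a then (b, p.2) else if p.1 = b then (a, p.2) else p

/-- Exchange the horizontal lines `y = a` and `y = b` of a diagram. -/
noncomputable def swapRows (R : GRD) (a b : ℝ) : GRD :=
  R.image fun p => if p.2 = a then (p.1, b) else if p.2 = b then (p.1, a) else p

/-- Commutation: two neighboring parallel edges (no vertex lies strictly between the
two parallel lines containing them) that do not interleave exchange their positions. -/
def Commutation (R R' : GRD) : Prop :=
  (∃ a b : ℝ, a < b ∧ (∃ p ∈ R, p.1 = a) ∧ (∃ p ∈ R, p.1 = b) ∧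
    (∀ p ∈ R, ¬ (a < p.1 ∧ p.1 < b)) ∧
    ¬ Interleave (fun y => (a, y) ∈ R) (fun y => (b, y) ∈ R) ∧
    R' = swapCols R a b) ∨
  (∃ a b : ℝ, a < b ∧ (∃ p ∈ R, p.2 = a) ∧ (∃ p ∈ R, p.2 = b) ∧
    (∀ p ∈ R, ¬ (a < p.2 ∧ p.2 < b)) ∧
    ¬ Interleave (fun x => (x, a) ∈ R) (fun x => (x, b) ∈ R) ∧
    R' = swapRows R a b)

def strictlyBetween (a t b : ℝ) : Prop := (a < t ∧ t < b) ∨ (b < t ∧ t < a)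

/-- Stabilization: a vertex `(x, y)` is replaced by the three other corners of a small
square with corners `(x, y)`, `(x', y)`, `(x, y')`, `(x', y')` (fresh lines `x'`, `y'`,
with no vertex of the diagram strictly between the lines `x, x'` nor between `y, y'`).
The two new short edges (sides of the square through the corner `(x', y')`) emerge from
their common end downward-and-leftward or upward-and-rightward exactly when the square
lies to the upper right or to the lower left of the original vertex (type L,
`typeL = true`); for type N (`typeL = false`) they emerge upward-and-leftward or
downward-and-rightward, i.e. the square lies to the upper left or to the lower right. -/
def Stab (typeL : Bool) (R R' : GRD) : Prop :=
  ∃ x y x' y' : ℝ, (x, y) ∈ R ∧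
    (if typeL then ((x < x' ∧ y < y') ∨ (x' < x ∧ y' < y))
     else ((x' < x ∧ y < y') ∨ (x < x' ∧ y' < y))) ∧
    (∀ p ∈ R, ¬ strictlyBetween x p.1 x') ∧
    (∀ p ∈ R, ¬ strictlyBetween y p.2 y') ∧
    (∀ p ∈ R, p.1 ≠ x') ∧ (∀ p ∈ R, p.2 ≠ y') ∧
    R' = insert (x', y) (insert (x, y') (insert (x', y') (R.erase (x, y))))

/-- End shift.  For adjacent vertices `v₁`, `v₂` on an edge (no vertex of the diagram
between them on the edge), where for type L (`typeL = true`) the vertex `v₂` has the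
greater coordinate along the edge and for type N (`typeL = false`) the smaller one:
either the shifts of `v₁`, `v₂` by `ε > 0` in the positive perpendicular direction are
added and `v₁` is removed, or the shifts by `ε` in the negative perpendicular direction
are added and `v₂` is removed; `ε` is small enough that no vertex of the diagram lies
between (or on) the line through `v₁, v₂` and the line through the shifted vertices. -/
def EndShift (typeL : Bool) (R R' : GRD) : Prop :=
  (∃ a y₁ y₂ ε : ℝ, 0 < ε ∧ y₁ < y₂ ∧ (a, y₁) ∈ R ∧ (a, y₂) ∈ R ∧
    (∀ t : ℝ, (a, t) ∈ R → ¬ (y₁ < t ∧ t < y₂)) ∧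
    (((∀ p ∈ R, ¬ (a < p.1 ∧ p.1 ≤ a + ε)) ∧
       R' = insert (a + ε, y₁) (insert (a + ε, y₂)
         (R.erase (a, if typeL then y₁ else y₂)))) ∨
     ((∀ p ∈ R, ¬ (a - ε ≤ p.1 ∧ p.1 < a)) ∧
       R' = insert (a - ε, y₁) (insert (a - ε, y₂)
         (R.erase (a, if typeL then y₂ else y₁)))))) ∨
  (∃ a x₁ x₂ ε : ℝ, 0 < ε ∧ x₁ < x₂ ∧ (x₁, a) ∈ R ∧ (x₂, a) ∈ R ∧
    (∀ t : ℝ, (t, a) ∈ R → ¬ (x₁ < t ∧ t < x₂)) ∧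
    (((∀ p ∈ R, ¬ (a < p.2 ∧ p.2 ≤ a + ε)) ∧
       R' = insert (x₁, a + ε) (insert (x₂, a + ε)
         (R.erase (if typeL then x₁ else x₂, a)))) ∨
     ((∀ p ∈ R, ¬ (a - ε ≤ p.2 ∧ p.2 < a)) ∧
       R' = insert (x₁, a - ε) (insert (x₂, a - ε)
         (R.erase (if typeL then x₂ else x₁, a))))))

/-- Vertex addition: a new vertex is added on the vertical (respectively horizontal)
line through an existing vertex, provided no vertex of the diagram lies on the
horizontal (respectively vertical) line through the new vertex. -/
def VertexAddition (R R' : GRD) : Prop :=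
  ∃ v : ℝ × ℝ, v ∉ R ∧ R' = insert v R ∧
    (((∃ w ∈ R, w.1 = v.1) ∧ ∀ w ∈ R, w.2 ≠ v.2) ∨
     ((∃ w ∈ R, w.2 = v.2) ∧ ∀ w ∈ R, w.1 ≠ v.1))

/-- An elementary move of type L (`typeL = true`) or N (`typeL = false`): a cyclic
permutation, a commutation, a stabilization or destabilization of the given type, an
end shift of the given type, or a vertex addition. -/
def ElemMove (typeL : Bool) (R R' : GRD) : Prop :=
  CyclicPermutation R R' ∨ Commutation R R' ∨ Stab typeL R R' ∨ Stab typeL R' R ∨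
    EndShift typeL R R' ∨ VertexAddition R R'

/-- One step in a sequence of elementary moves of the given type; since diagrams are
identified up to combinatorial equivalence, combinatorially equivalent diagrams are
also related by a step. -/
def Step (typeL : Bool) (R R' : GRD) : Prop :=
  ElemMove typeL R R' ∨ CombEquiv R R'

/-- In the cyclic order (on `ℝ` closed up into a circle), the elements of `A`, then the
point `u`, then the elements of `B` occur in this cyclic order. -/
def CyclicBetween (A : Finset ℝ) (u : ℝ) (B : Finset ℝ) : Prop :=
  ((∀ a ∈ A, a < u) ∧ (∀ b ∈ B, u < b)) ∨
  ((∀ b ∈ B, u < b) ∧ (∀ a ∈ A, ∀ b ∈ B, b < a)) ∨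
  ((∀ a ∈ A, a < u) ∧ (∀ a ∈ A, ∀ b ∈ B, b < a))

/-- Edge breaking.  The vertices of a horizontal (respectively vertical) edge on the
line `c` are separated into two nonempty parts `S₁`, `S₂`, placed on neighboring lines
`c₁ ≤ c ≤ c₂` (`c₁ < c₂`, with no other vertex of the diagram between the lines `c₁`
and `c₂`), forming edges `e₁` (from `S₁`, on `c₁`) and `e₂` (from `S₂`, on `c₂`, the one
with the greater perpendicular coordinate); the two pieces are joined by a short edge on
a fresh line `u`, which in the cyclic order is greater than the coordinates of the
vertices of `e₂` and smaller than those of `e₁` for type L, and the other way around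
(the roles of `e₁` and `e₂` exchanged) for type N. -/
def EdgeBreaking (typeL : Bool) (R R' : GRD) : Prop :=
  (∃ c c₁ c₂ u : ℝ, ∃ S₁ S₂ : Finset ℝ,
    c₁ < c₂ ∧ c₁ ≤ c ∧ c ≤ c₂ ∧ S₁.Nonempty ∧ S₂.Nonempty ∧ Disjoint S₁ S₂ ∧
    (∀ x : ℝ, (x, c) ∈ R ↔ x ∈ S₁ ∪ S₂) ∧
    (∀ p ∈ R, p.1 ≠ u) ∧
    (∀ p ∈ R, c₁ ≤ p.2 ∧ p.2 ≤ c₂ → p.2 = c) ∧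
    (if typeL then CyclicBetween S₂ u S₁ else CyclicBetween S₁ u S₂) ∧
    R' = ((R.filter fun p => p.2 ≠ c) ∪ S₁.image (fun x => (x, c₁)) ∪
      S₂.image (fun x => (x, c₂)) ∪ {(u, c₁), (u, c₂)})) ∨
  (∃ c c₁ c₂ u : ℝ, ∃ S₁ S₂ : Finset ℝ,
    c₁ < c₂ ∧ c₁ ≤ c ∧ c ≤ c₂ ∧ S₁.Nonempty ∧ S₂.Nonempty ∧ Disjoint S₁ S₂ ∧
    (∀ y : ℝ, (c, y) ∈ R ↔ y ∈ S₁ ∪ S₂) ∧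
    (∀ p ∈ R, p.2 ≠ u) ∧
    (∀ p ∈ R, c₁ ≤ p.1 ∧ p.1 ≤ c₂ → p.1 = c) ∧
    (if typeL then CyclicBetween S₂ u S₁ else CyclicBetween S₁ u S₂) ∧
    R' = ((R.filter fun p => p.1 ≠ c) ∪ S₁.image (fun y => (c₁, y)) ∪
      S₂.image (fun y => (c₂, y)) ∪ {(c₁, u), (c₂, u)}))

/-- `p` lies in the open rectangle `(x₀, x₁) × (y₀, y₁)`. -/
def inRect (x₀ x₁ y₀ y₁ : ℝ) (p : ℝ × ℝ) : Prop :=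
  x₀ < p.1 ∧ p.1 < x₁ ∧ y₀ < p.2 ∧ p.2 < y₁

/-- A flype of type L (in the forward direction): for `x₀ < x₁ < x₂`, `y₀ < y₁ < y₂`,
with rectangles `r_ij = (x_i, x_{i+1}) × (y_j, y_{j+1})`: the rectangle `r₁₁` contains
no vertex; in each of `r₀₁` and `r₁₀`, of any two vertices the right one is higher; and
every vertex `v` in `r₀₀` has a vertex `v₀₁ ∈ r₀₁` with the same `x`-coordinate and a
vertex `v₁₀ ∈ r₁₀` with the same `y`-coordinate.  The move takes each such `v` to the
fourth corner of the rectangle with corners `v`, `v₀₁`, `v₁₀`, all other vertices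
staying fixed. -/
def FlypeLOnce (R R' : GRD) : Prop :=
  ∃ x₀ x₁ x₂ y₀ y₁ y₂ : ℝ, x₀ < x₁ ∧ x₁ < x₂ ∧ y₀ < y₁ ∧ y₁ < y₂ ∧
    (∀ p ∈ R, ¬ inRect x₁ x₂ y₁ y₂ p) ∧
    (∀ p ∈ R, ∀ q ∈ R, inRect x₀ x₁ y₁ y₂ p → inRect x₀ x₁ y₁ y₂ q →
      p.1 < q.1 → p.2 < q.2) ∧
    (∀ p ∈ R, ∀ q ∈ R, inRect x₁ x₂ y₀ y₁ p → inRect x₁ x₂ y₀ y₁ q →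
      p.1 < q.1 → p.2 < q.2) ∧
    ∃ φ : ℝ × ℝ → ℝ × ℝ,
      (∀ p ∈ R, ¬ inRect x₀ x₁ y₀ y₁ p → φ p = p) ∧
      (∀ p ∈ R, inRect x₀ x₁ y₀ y₁ p →
        ∃ q ∈ R, ∃ r ∈ R, inRect x₀ x₁ y₁ y₂ q ∧ q.1 = p.1 ∧
          inRect x₁ x₂ y₀ y₁ r ∧ r.2 = p.2 ∧ φ p = (r.1, q.2)) ∧
      R' = R.image φ

/-- A flype of type L: the move just described or its inverse. -/
def FlypeL (R R' : GRD) : Prop := FlypeLOnce R R' ∨ FlypeLOnce R' R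

/-- A fence diagram: posts are horizontal segments `[l, r] × {y}`, `y ∈ posts` (all
related by a vertical shift); wires are vertical segments recorded as
`(x, bottom level, top level)`, with endpoints interior to posts and no two wires on
the same vertical line. -/
structure Fence where
  posts : Finset ℝ
  l : ℝ
  r : ℝ
  wires : Finset (ℝ × ℝ × ℝ)
  hlr : l < r
  hx : ∀ w ∈ wires, l < w.1 ∧ w.1 < r
  hy : ∀ w ∈ wires, w.2.1 ∈ posts ∧ w.2.2 ∈ posts ∧ w.2.1 < w.2.2
  hinj : ∀ w ∈ wires, ∀ w' ∈ wires, w.1 = w'.1 → w = w'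

/-- Combinatorial equivalence of fence diagrams. -/
def FenceEquiv (F F' : Fence) : Prop :=
  ∃ f g : ℝ → ℝ, StrictMono f ∧ StrictMono g ∧
    F'.l = f F.l ∧ F'.r = f F.r ∧
    F'.posts = F.posts.image g ∧
    F'.wires = F.wires.image fun w => (f w.1, g w.2.1, g w.2.2)

/-- The wire on the vertical line `x` joining the posts at levels `p` and `q`. -/
noncomputable def mkWire (x p q : ℝ) : ℝ × ℝ × ℝ := (x, min p q, max p q)

/-- Twirl: the top (respectively bottom) post is moved to the opposite side, taking
along all wires attached to it. -/
def Twirl (F F' : Fence) : Prop :=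
  F'.l = F.l ∧ F'.r = F.r ∧
  ((∃ t b : ℝ, t ∈ F.posts ∧ (∀ y ∈ F.posts, y ≤ t) ∧ (∀ y ∈ F.posts, b < y) ∧
     F'.posts = insert b (F.posts.erase t) ∧
     F'.wires = F.wires.image fun w => if w.2.2 = t then (w.1, b, w.2.1) else w) ∨
   (∃ t b : ℝ, b ∈ F.posts ∧ (∀ y ∈ F.posts, b ≤ y) ∧ (∀ y ∈ F.posts, y < t) ∧
     F'.posts = insert t (F.posts.erase b) ∧
     F'.wires = F.wires.image fun w => if w.2.1 = b then (w.1, w.2.2, t) else w))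

/-- Turn: the rightmost (respectively leftmost) wire is moved to the opposite side. -/
def Turn (F F' : Fence) : Prop :=
  F'.l = F.l ∧ F'.r = F.r ∧ F'.posts = F.posts ∧
  ((∃ w ∈ F.wires, ∃ x : ℝ, (∀ w' ∈ F.wires, w'.1 ≤ w.1) ∧
     F.l < x ∧ (∀ w' ∈ F.wires, w' ≠ w → x < w'.1) ∧ x < w.1 ∧
     F'.wires = insert (x, w.2) (F.wires.erase w)) ∨
   (∃ w ∈ F.wires, ∃ x : ℝ, (∀ w' ∈ F.wires, w.1 ≤ w'.1) ∧
     x < F.r ∧ (∀ w' ∈ F.wires, w' ≠ w → w'.1 < x) ∧ w.1 < x ∧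
     F'.wires = insert (x, w.2) (F.wires.erase w)))

/-- Two wires interleave if exactly one endpoint level of one lies strictly between the
endpoint levels of the other. -/
def WiresInterleave (w w' : ℝ × ℝ × ℝ) : Prop :=
  (w.2.1 < w'.2.1 ∧ w'.2.1 < w.2.2 ∧ w.2.2 < w'.2.2) ∨
  (w'.2.1 < w.2.1 ∧ w.2.1 < w'.2.2 ∧ w'.2.2 < w.2.2)

/-- Slip: two neighboring non-interleaving wires exchange their horizontal positions. -/
def Slip (F F' : Fence) : Prop :=
  F'.l = F.l ∧ F'.r = F.r ∧ F'.posts = F.posts ∧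
  ∃ w₁ ∈ F.wires, ∃ w₂ ∈ F.wires, w₁.1 < w₂.1 ∧
    (∀ w ∈ F.wires, ¬ (w₁.1 < w.1 ∧ w.1 < w₂.1)) ∧
    ¬ WiresInterleave w₁ w₂ ∧
    F'.wires = insert (w₂.1, w₁.2) (insert (w₁.1, w₂.2) ((F.wires.erase w₁).erase w₂))

/-- `a`, `b`, `c` occur in this cyclic order on `ℝ` closed up into a circle. -/
def CyclicOrd3 (a b c : ℝ) : Prop :=
  (a < b ∧ b < c) ∨ (b < c ∧ c < a) ∨ (c < a ∧ a < b)

/-- Slide: given two neighboring wires, the left joining posts at levels `a` and `b`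
and the right joining posts at levels `a` and `c` with `a < b < c < a` in the cyclic
order, they are replaced by two wires at the same horizontal positions, the left
joining levels `b` and `c` and the right joining levels `b` and `a`. -/
def Slide (F F' : Fence) : Prop :=
  F'.l = F.l ∧ F'.r = F.r ∧ F'.posts = F.posts ∧
  ∃ a b c x₁ x₂ : ℝ, x₁ < x₂ ∧ CyclicOrd3 a b c ∧
    mkWire x₁ a b ∈ F.wires ∧ mkWire x₂ a c ∈ F.wires ∧
    (∀ w ∈ F.wires, ¬ (x₁ < w.1 ∧ w.1 < x₂)) ∧
    F'.wires = insert (mkWire x₁ b c) (insert (mkWire x₂ b a)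
      ((F.wires.erase (mkWire x₁ a b)).erase (mkWire x₂ a c)))

/-- Inflation: a new post is added at a fresh vertical level and joined to some
existing post by one new wire (on a fresh vertical line). -/
def Inflation (F F' : Fence) : Prop :=
  F'.l = F.l ∧ F'.r = F.r ∧
  ∃ n m x : ℝ, n ∉ F.posts ∧ m ∈ F.posts ∧
    F.l < x ∧ x < F.r ∧ (∀ w ∈ F.wires, w.1 ≠ x) ∧
    F'.posts = insert n F.posts ∧
    F'.wires = insert (mkWire x n m) F.wires

/-- A fence move: a twirl, a turn, a slip, a slide, an inflation or a deflation. -/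
def FenceMove (F F' : Fence) : Prop :=
  Twirl F F' ∨ Turn F F' ∨ Slip F F' ∨ Slide F F' ∨ Inflation F F' ∨ Inflation F' F

/-- One step in a sequence of fence moves; combinatorially equivalent fence diagrams
are identified. -/
def FenceStep (F F' : Fence) : Prop := FenceMove F F' ∨ FenceEquiv F F'

/-- `R(F)`: the generalized rectangular diagram whose vertices are the endpoints of
the wires of the fence diagram `F`. -/
noncomputable def fenceToGRD (F : Fence) : GRD :=
  F.wires.image (fun w => (w.1, w.2.1)) ∪ F.wires.image (fun w => (w.1, w.2.2))

/-- Every vertical edge of the diagram contains exactly two vertices. -/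
def VertTwo (R : GRD) : Prop :=
  ∀ a : ℝ, (∃ y : ℝ, (a, y) ∈ R) →
    ∃ y₁ y₂ : ℝ, y₁ < y₂ ∧ ∀ y : ℝ, ((a, y) ∈ R ↔ (y = y₁ ∨ y = y₂))

/-- `F` is a fence diagram `F(R)` of the diagram `R` (each of whose vertical edges is
assumed to contain exactly two vertices): its wires are the vertical edges of `R` and
its posts are horizontal segments at exactly the levels of the horizontal edges of
`R`. -/
def IsFenceOf (R : GRD) (F : Fence) : Prop :=
  F.posts = R.image Prod.snd ∧
  ∀ w : ℝ × ℝ × ℝ,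
    (w ∈ F.wires ↔ ((w.1, w.2.1) ∈ R ∧ (w.1, w.2.2) ∈ R ∧ w.2.1 < w.2.2))


/-- The target relation. -/
def E0 (R R' : GRD) : Prop :=
  Commutation R R' ∨ EndShift true R R' ∨ VertexAddition R R' ∨ CombEquiv R R'

def EE : GRD → GRD → Prop := Relation.EqvGen E0

theorem EE.symm' {R R' : GRD} (h : EE R R') : EE R' R := Relation.EqvGen.symm _ _ h
theorem EE.trans' {R R' R'' : GRD} (h : EE R R') (h' : EE R' R'') : EE R R'' :=
  Relation.EqvGen.trans _ _ _ h h'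
theorem EE.of {R R' : GRD} (h : E0 R R') : EE R R' := Relation.EqvGen.rel _ _ h
theorem EE.refl' (R : GRD) : EE R R := Relation.EqvGen.refl _

/-- Transposition. -/
noncomputable def Tr (R : GRD) : GRD := R.image Prod.swap

@[simp] theorem mem_Tr (R : GRD) (x y : ℝ) : (x, y) ∈ Tr R ↔ (y, x) ∈ R := by
  simp [Tr]

theorem Tr_Tr (R : GRD) : Tr (Tr R) = R := by
  ext ⟨x, y⟩; simp

theorem Tr_moveCol (R : GRD) (a b : ℝ) : Tr (moveCol R a b) = moveRow (Tr R) a b := by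
  unfold Tr moveCol moveRow
  rw [Finset.image_image, Finset.image_image]
  refine Finset.image_congr ?_
  rintro ⟨x, y⟩ _
  by_cases h : x = a <;> simp [h]

theorem Tr_swapCols (R : GRD) (a b : ℝ) : Tr (swapCols R a b) = swapRows (Tr R) a b := by
  unfold Tr swapCols swapRows
  rw [Finset.image_image, Finset.image_image]
  refine Finset.image_congr ?_
  rintro ⟨x, y⟩ _
  simp only [Function.comp, Prod.swap]
  split_ifs <;> rfl

theorem Tr_swapRows (R : GRD) (a b : ℝ) : Tr (swapRows R a b) = swapCols (Tr R) a b := by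
  conv_lhs => rw [← Tr_Tr R]
  rw [← Tr_swapCols, Tr_Tr]

theorem Tr_insert (R : GRD) (x y : ℝ) : Tr (insert (x, y) R) = insert (y, x) (Tr R) := by
  simp [Tr]

theorem Tr_erase (R : GRD) (x y : ℝ) : Tr (R.erase (x, y)) = (Tr R).erase (y, x) := by
  ext ⟨u, v⟩; simp; tauto

theorem Tr_E0 {R R' : GRD} (h : E0 R R') : E0 (Tr R) (Tr R') := by
  rcases h with h | h | h | h
  · left
    rcases h with ⟨a, b, hab, ⟨⟨p1, p2⟩, hp, hpa⟩, ⟨⟨q1, q2⟩, hq, hqb⟩, h1, h2, h3⟩ |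
      ⟨a, b, hab, ⟨⟨p1, p2⟩, hp, hpa⟩, ⟨⟨q1, q2⟩, hq, hqb⟩, h1, h2, h3⟩
    · right
      refine ⟨a, b, hab, ⟨(p2, p1), by simpa using hp, hpa⟩, ⟨(q2, q1), by simpa using hq, hqb⟩,
        ?_, by simpa using h2, by rw [h3, Tr_swapCols]⟩
      rintro ⟨x, y⟩ hxy
      exact h1 (y, x) (by simpa using hxy)
    · left
      refine ⟨a, b, hab, ⟨(p2, p1), by simpa using hp, hpa⟩, ⟨(q2, q1), by simpa using hq, hqb⟩,
        ?_, by simpa using h2, by rw [h3, Tr_swapRows]⟩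
      rintro ⟨x, y⟩ hxy
      exact h1 (y, x) (by simpa using hxy)
  · right; left
    rcases h with ⟨a, y₁, y₂, ε, hε, hy, h1, h2, h3, h4⟩ | ⟨a, y₁, y₂, ε, hε, hy, h1, h2, h3, h4⟩
    · right
      refine ⟨a, y₁, y₂, ε, hε, hy, (mem_Tr ..).2 h1, (mem_Tr ..).2 h2,
        fun t ht => h3 t ((mem_Tr ..).1 ht), ?_⟩
      rcases h4 with ⟨h4, h5⟩ | ⟨h4, h5⟩
      · left
        exact ⟨fun ⟨x, y⟩ hxy => h4 (y, x) (by simpa using hxy),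
          by rw [h5, Tr_insert, Tr_insert, Tr_erase]⟩
      · right
        exact ⟨fun ⟨x, y⟩ hxy => h4 (y, x) (by simpa using hxy),
          by rw [h5, Tr_insert, Tr_insert, Tr_erase]⟩
    · left
      refine ⟨a, y₁, y₂, ε, hε, hy, (mem_Tr ..).2 h1, (mem_Tr ..).2 h2,
        fun t ht => h3 t ((mem_Tr ..).1 ht), ?_⟩
      rcases h4 with ⟨h4, h5⟩ | ⟨h4, h5⟩
      · left
        exact ⟨fun ⟨x, y⟩ hxy => h4 (y, x) (by simpa using hxy),
          by rw [h5, Tr_insert, Tr_insert, Tr_erase]⟩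
      · right
        exact ⟨fun ⟨x, y⟩ hxy => h4 (y, x) (by simpa using hxy),
          by rw [h5, Tr_insert, Tr_insert, Tr_erase]⟩
  · right; right; left
    obtain ⟨⟨x, y⟩, h1, h2, h3⟩ := h
    refine ⟨(y, x), by simpa using h1, by rw [h2, Tr_insert], ?_⟩
    rcases h3 with ⟨⟨⟨u, v⟩, h3, h4⟩, h5⟩ | ⟨⟨⟨u, v⟩, h3, h4⟩, h5⟩
    · right
      exact ⟨⟨(v, u), by simpa using h3, h4⟩, fun ⟨x, y⟩ hxy => h5 (y, x) (by simpa using hxy)⟩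
    · left
      exact ⟨⟨(v, u), by simpa using h3, h4⟩, fun ⟨x, y⟩ hxy => h5 (y, x) (by simpa using hxy)⟩
  · right; right; right
    obtain ⟨f, g, hf, hg, h⟩ := h
    refine ⟨g, f, hg, hf, ?_⟩
    rw [h]
    unfold Tr
    rw [Finset.image_image, Finset.image_image]
    rfl

theorem Tr_EE {R R' : GRD} (h : EE R R') : EE (Tr R) (Tr R') := by
  induction h with
  | rel _ _ h => exact EE.of (Tr_E0 h)
  | refl _ => exact EE.refl' _
  | symm _ _ _ ih => exact ih.symm'
  | trans _ _ _ _ _ ih1 ih2 => exact ih1.trans' ih2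

/-- Add a column at `a` with heights `S`. -/
noncomputable def cl (B : GRD) (a : ℝ) (S : Finset ℝ) : GRD := B ∪ S.image (Prod.mk a)

@[simp] theorem mem_cl (B : GRD) (a : ℝ) (S : Finset ℝ) (x y : ℝ) :
    (x, y) ∈ cl B a S ↔ (x, y) ∈ B ∨ (x = a ∧ y ∈ S) := by
  simp only [cl, Finset.mem_union, Finset.mem_image, Prod.mk.injEq]
  constructor
  · rintro (h | ⟨z, hz, rfl, rfl⟩)
    · exact Or.inl h
    · exact Or.inr ⟨rfl, hz⟩
  · rintro (h | ⟨rfl, hz⟩)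
    · exact Or.inl h
    · exact Or.inr ⟨y, hz, rfl, rfl⟩

theorem cl_comm (B : GRD) (a d : ℝ) (S T : Finset ℝ) : cl (cl B a S) d T = cl (cl B d T) a S := by
  ext ⟨x, y⟩; simp only [mem_cl]; tauto

theorem exists_right (S : Finset ℝ) {a z : ℝ} (h : a < z) :
    ∃ t, a < t ∧ t < z ∧ ∀ s ∈ S, s ≤ a ∨ t < s := by
  induction S using Finset.induction_on with
  | empty => obtain ⟨t, h1, h2⟩ := exists_between h; exact ⟨t, h1, h2, by simp⟩
  | insert s S _ ih =>
    obtain ⟨t, h1, h2, h3⟩ := ih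
    by_cases hs : s ≤ a
    · refine ⟨t, h1, h2, ?_⟩
      intro r hr
      rcases Finset.mem_insert.1 hr with rfl | hr
      · exact Or.inl hs
      · exact h3 r hr
    · push Not at hs
      obtain ⟨t', h4, h5⟩ := exists_between (lt_min h1 hs)
      obtain ⟨h6, h7⟩ := lt_min_iff.1 h5
      refine ⟨t', h4, by linarith, ?_⟩
      intro r hr
      rcases Finset.mem_insert.1 hr with rfl | hr
      · exact Or.inr h7
      · have := h3 r hr
        grind

theorem exists_left (S : Finset ℝ) {a z : ℝ} (h : z < a) :
    ∃ t, z < t ∧ t < a ∧ ∀ s ∈ S, a ≤ s ∨ s < t := by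
  obtain ⟨t, h1, h2, h3⟩ := exists_right (S.image Neg.neg) (neg_lt_neg h)
  refine ⟨-t, by linarith, by linarith, ?_⟩
  intro s hs
  rcases h3 (-s) (Finset.mem_image_of_mem _ hs) with h | h
  · left; linarith
  · right; linarith

theorem exists_mono {l a c u : ℝ} (h1 : l < a) (h2 : a ≤ c) (h3 : c < u) :
    ∃ f : ℝ → ℝ, StrictMono f ∧ f a = c ∧ (∀ x, x ≤ l → f x = x) ∧ ∀ x, u ≤ x → f x = x := by
  have ha : 0 < a - l := by linarith
  have hu : 0 < u - a := by linarith
  have s1 : 1 ≤ (c - l) / (a - l) := by rw [le_div_iff₀ ha]; linarith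
  have s2 : (u - c) / (u - a) ≤ 1 := by rw [div_le_iff₀ hu]; linarith
  have s3 : 0 < (u - c) / (u - a) := div_pos (by linarith) hu
  have e1 : l + (a - l) * ((c - l) / (a - l)) = c := by
    rw [mul_div_cancel₀ _ ha.ne']; ring
  have e2 : u + (a - u) * ((u - c) / (u - a)) = c := by
    have : (u - a) * ((u - c) / (u - a)) = u - c := mul_div_cancel₀ _ hu.ne'
    linarith
  generalize (c - l) / (a - l) = m at *
  generalize (u - c) / (u - a) = n at *
  refine ⟨fun x => max x (min (l + (x - l) * m) (u + (x - u) * n)), ?_, ?_, ?_, ?_⟩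
  · intro x y hxy
    have i1 : l + (x - l) * m < l + (y - l) * m := by nlinarith
    have i2 : u + (x - u) * n < u + (y - u) * n := by nlinarith
    exact max_lt_max hxy (min_lt_min i1 i2)
  · simp only [e1, e2, min_self]; exact max_eq_right h2
  · intro x hx
    exact max_eq_left (min_le_of_left_le (by nlinarith))
  · intro x hx
    exact max_eq_left (min_le_of_right_le (by nlinarith))

theorem comb_move_aux (B : GRD) (S : Finset ℝ) {a c : ℝ} (hac : a ≤ c)
    (h : ∀ p ∈ B, p.1 < a ∨ c < p.1) : EE (cl B a S) (cl B c S) := by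
  obtain ⟨l, _, hl, hl'⟩ := exists_left (B.image Prod.fst) (sub_one_lt a)
  obtain ⟨u, hu, _, hu'⟩ := exists_right (B.image Prod.fst) (lt_add_one c)
  obtain ⟨f, hf, fa, f1, f2⟩ := exists_mono hl hac hu
  refine EE.of (Or.inr (Or.inr (Or.inr ⟨f, id, hf, strictMono_id, ?_⟩)))
  have hB : ∀ p ∈ B, f p.1 = p.1 := by
    intro p hp
    have a1 := hl' p.1 (Finset.mem_image_of_mem _ hp)
    have a2 := hu' p.1 (Finset.mem_image_of_mem _ hp)
    rcases h p hp with h | h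
    · exact f1 _ (by rcases a1 with a1 | a1 <;> linarith)
    · exact f2 _ (by rcases a2 with a2 | a2 <;> linarith)
  unfold cl
  rw [Finset.image_union, Finset.image_image]
  congr 1
  · conv_lhs => rw [← Finset.image_id (s := B)]
    refine Finset.image_congr ?_
    intro p hp
    simp [hB p hp]
  · refine Finset.image_congr ?_
    intro p hp
    simp [fa]

theorem comb_move (B : GRD) (S : Finset ℝ) {a c : ℝ}
    (h : ∀ p ∈ B, (p.1 < a ∧ p.1 < c) ∨ (a < p.1 ∧ c < p.1)) : EE (cl B a S) (cl B c S) := by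
  rcases le_total a c with hac | hac
  · exact comb_move_aux B S hac (fun p hp => by have := h p hp; tauto)
  · exact (comb_move_aux B S hac (fun p hp => by have := h p hp; tauto)).symm'

theorem comm_cl (B : GRD) (S T : Finset ℝ) {a d : ℝ} (hda : d < a)
    (h : ∀ p ∈ B, p.1 < d ∨ a < p.1) (hS : S.Nonempty) (hT : T.Nonempty)
    (hI : ¬ Interleave (· ∈ S) (· ∈ T)) :
    EE (cl (cl B a S) d T) (cl (cl B d S) a T) := by
  have ea : ∀ y, (a, y) ∈ cl (cl B a S) d T ↔ y ∈ S := by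
    intro y
    have := h (a, y)
    simp only [mem_cl]
    grind
  have ed : ∀ y, (d, y) ∈ cl (cl B a S) d T ↔ y ∈ T := by
    intro y
    have := h (d, y)
    simp only [mem_cl]
    grind
  obtain ⟨s, hs⟩ := hS
  obtain ⟨t, ht⟩ := hT
  refine EE.of (Or.inl (Or.inl ⟨d, a, hda, ⟨(d, t), (ed t).2 ht, rfl⟩, ⟨(a, s), (ea s).2 hs, rfl⟩,
    ?_, ?_, ?_⟩))
  · rintro ⟨x, y⟩ hp
    have := h (x, y)
    simp only [mem_cl] at hp
    grind
  · simp only [ea, ed]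
    intro hI'
    apply hI
    unfold Interleave at hI' ⊢
    exact hI'.symm
  · unfold swapCols cl
    simp only [Finset.image_union, Finset.image_image]
    congr 1
    · congr 1
      · conv_lhs => rw [← Finset.image_id (s := B)]
        refine Finset.image_congr ?_
        intro p hp
        have := h p hp
        have h1 : p.1 ≠ d := by grind
        have h2 : p.1 ≠ a := by grind
        simp [h1, h2]
      · refine Finset.image_congr ?_
        intro p hp
        simp [hda.ne']
    · refine Finset.image_congr ?_
      intro p hp
      simp

theorem free_move_aux (S : Finset ℝ) (hS : S.Nonempty) (n : ℕ) : ∀ (B : GRD) (a c : ℝ), c < a →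
    ((B.image Prod.fst).filter (fun x => c < x ∧ x < a)).card ≤ n →
    (∀ p ∈ B, p.1 ≠ a) → (∀ p ∈ B, p.1 ≠ c) →
    (∀ d, ¬ Interleave (· ∈ S) (fun y => (d, y) ∈ B)) → EE (cl B a S) (cl B c S) := by
  induction n with
  | zero =>
    intro B a c hca hn ha hc _
    apply comb_move
    intro p hp
    have h0 := Finset.card_eq_zero.1 (Nat.le_zero.1 hn)
    have : p.1 ∉ ((B.image Prod.fst).filter (fun x => c < x ∧ x < a)) := by rw [h0]; simp
    have hm := Finset.mem_image_of_mem Prod.fst hp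
    have h1 := ha p hp
    have h2 := hc p hp
    simp only [Finset.mem_filter, hm, true_and] at this
    grind
  | succ n ih =>
    intro B a c hca hn ha hc hI
    by_cases hne : ((B.image Prod.fst).filter (fun x => c < x ∧ x < a)).Nonempty
    swap
    · apply ih B a c hca _ ha hc hI
      rw [Finset.not_nonempty_iff_eq_empty] at hne
      simp [hne]
    obtain ⟨d, hd, hmax⟩ := Finset.exists_max_image _ id hne
    obtain ⟨hdB, hcd, hda⟩ := Finset.mem_filter.1 hd
    obtain ⟨⟨d', t⟩, ht, hd'⟩ := Finset.mem_image.1 hdB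
    simp only at hd'
    subst hd'
    obtain ⟨e, hce, hed, he⟩ := exists_left (B.image Prod.fst) hcd
    have he : ∀ p ∈ B, d' ≤ p.1 ∨ p.1 < e := fun p hp => he p.1 (Finset.mem_image_of_mem _ hp)
    have hmax : ∀ p ∈ B, c < p.1 → p.1 < a → p.1 ≤ d' := fun p hp h1 h2 =>
      hmax p.1 (Finset.mem_filter.2 ⟨Finset.mem_image_of_mem _ hp, h1, h2⟩)
    obtain ⟨T, hT⟩ : ∃ T : Finset ℝ, T = (B.filter (fun p => p.1 = d')).image Prod.snd := ⟨_, rfl⟩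
    obtain ⟨B', hB'⟩ : ∃ B' : GRD, B' = B.filter (fun p => p.1 ≠ d') := ⟨_, rfl⟩
    have mT : ∀ y, y ∈ T ↔ (d', y) ∈ B := by
      intro y; simp [hT]
    have mB' : ∀ p, p ∈ B' ↔ p ∈ B ∧ p.1 ≠ d' := by
      intro y; simp [hB']
    have hB : B = cl B' d' T := by
      ext ⟨x, y⟩
      simp only [mem_cl, mT, mB']
      grind
    have k : ∀ p ∈ B', p.1 < e ∨ a < p.1 := by
      intro p hp
      obtain ⟨h1, h2⟩ := (mB' p).1 hp
      have := he p h1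
      have := hmax p h1
      have := ha p h1
      grind
    have s1 : EE (cl B a S) (cl (cl B' d' S) a T) := by
      rw [hB, cl_comm]
      refine comm_cl B' S T hda ?_ hS ⟨t, (mT t).2 ht⟩ ?_
      · intro p hp
        have := k p hp
        grind
      · simp only [mT]; exact hI d'
    have s2 : EE (cl (cl B' d' S) a T) (cl (cl B' a T) e S) := by
      rw [cl_comm]
      apply comb_move
      rintro ⟨x, y⟩ hp
      have := k (x, y)
      rw [mem_cl] at hp
      grind
    have s3 : EE (cl (cl B' a T) e S) (cl B e S) := by
      rw [hB, cl_comm B' d', cl_comm B' a]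
      apply comb_move
      rintro ⟨x, y⟩ hp
      have := k (x, y)
      rw [mem_cl] at hp
      grind
    refine (s1.trans' (s2.trans' s3)).trans' (ih B e c hce ?_ ?_ hc hI)
    · refine Nat.lt_succ_iff.1 (lt_of_lt_of_le (Finset.card_lt_card ?_) hn)
      refine ⟨?_, ?_⟩
      · intro x hx
        simp only [Finset.mem_filter] at hx ⊢
        refine ⟨hx.1, hx.2.1, by linarith [hx.2.2]⟩
      · intro hsub
        have := (Finset.mem_filter.1 (hsub hd)).2.2
        linarith
    · intro p hp
      have := he p hp
      grind

theorem free_move (S : Finset ℝ) (hS : S.Nonempty) (B : GRD) (a c : ℝ)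
    (ha : ∀ p ∈ B, p.1 ≠ a) (hc : ∀ p ∈ B, p.1 ≠ c)
    (hI : ∀ d, ¬ Interleave (· ∈ S) (fun y => (d, y) ∈ B)) : EE (cl B a S) (cl B c S) := by
  rcases lt_trichotomy a c with h | h | h
  · exact (free_move_aux S hS _ B c a h le_rfl hc ha hI).symm'
  · rw [h]; exact EE.refl' _
  · exact free_move_aux S hS _ B a c h le_rfl ha hc hI

theorem es_cl (B : GRD) (S : Finset ℝ) {a a' y₁ y₂ : ℝ} (haa : a < a')
    (h : ∀ p ∈ B, p.1 < a ∨ a' < p.1) (h12 : y₁ < y₂) (h2 : y₂ ∈ S) (hS : ∀ y ∈ S, y₂ ≤ y) :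
    EE (cl B a (insert y₁ S)) (cl (cl B a S) a' {y₁, y₂}) := by
  refine EE.of (Or.inr (Or.inl (Or.inl ⟨a, y₁, y₂, a' - a, by linarith, h12, by simp,
    by simp [h2], ?_, Or.inl ⟨?_, ?_⟩⟩)))
  · intro t ht
    have := h (a, t)
    simp only [mem_cl, Finset.mem_insert] at ht
    grind
  · rintro ⟨x, y⟩ hp
    have := h (x, y)
    simp only [mem_cl, Finset.mem_insert] at hp
    grind
  · ext ⟨x, y⟩
    have := h (x, y)
    have := hS y
    simp only [mem_cl, Finset.mem_insert, Finset.mem_erase, Finset.mem_singleton, Prod.mk.injEq,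
      if_true, add_sub_cancel, ne_eq]
    grind

theorem va_cl (B : GRD) (S : Finset ℝ) {a t : ℝ} (hS : S.Nonempty) (ht : t ∉ S)
    (h : ∀ p ∈ B, p.2 ≠ t) : EE (cl B a S) (cl B a (insert t S)) := by
  obtain ⟨s, hs⟩ := hS
  refine EE.of (Or.inr (Or.inr (Or.inl ⟨(a, t), ?_, ?_, Or.inl ⟨⟨(a, s), by simp [hs], rfl⟩, ?_⟩⟩)))
  · intro hp
    have := h (a, t)
    simp only [mem_cl] at hp
    grind
  · ext ⟨x, y⟩
    simp only [mem_cl, Finset.mem_insert, Prod.mk.injEq]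
    grind
  · rintro ⟨x, y⟩ hp
    have := h (x, y)
    simp only [mem_cl] at hp
    grind

theorem not_interleave_pair {u v : ℝ} (huv : u < v) (Q : ℝ → Prop)
    (hQ : (∀ q, Q q → q ≤ u ∨ v ≤ q) ∨ ∀ q, Q q → u ≤ q ∧ q ≤ v) :
    ¬ Interleave (· ∈ ({u, v} : Finset ℝ)) Q := by
  simp only [Finset.mem_insert, Finset.mem_singleton]
  rintro (⟨a1, h1, b1, h2, a2, h3, b2, h4, h5, h6, h7⟩ |
    ⟨b1, h2, a1, h1, b2, h4, a2, h3, h5, h6, h7⟩)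
  · rcases hQ with hQ | hQ
    · have := hQ b1 h2; grind
    · have := hQ b2 h4; grind
  · rcases hQ with hQ | hQ
    · have := hQ b2 h4; grind
    · have := hQ b1 h2; grind

theorem two_move (B : GRD) {a b y₁ y₂ : ℝ} (hy : y₁ < y₂) (ha : ∀ p ∈ B, p.1 < a)
    (hb : ∀ p ∈ B, b < p.1) (hba : b < a) :
    EE (cl B a {y₁, y₂}) (cl B b {y₁, y₂}) := by
  obtain ⟨t', h1, h2, ht'⟩ := exists_left (B.image Prod.snd) hy
  obtain ⟨t, h3, h4, ht⟩ := exists_right (B.image Prod.snd) h1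
  have ht' : ∀ p ∈ B, y₂ ≤ p.2 ∨ p.2 < t' := fun p hp => ht' p.2 (Finset.mem_image_of_mem _ hp)
  have ht : ∀ p ∈ B, p.2 ≤ y₁ ∨ t < p.2 := fun p hp => ht p.2 (Finset.mem_image_of_mem _ hp)
  have s1 : EE (cl B a {y₁, y₂}) (cl B a (insert y₁ {t, y₂})) := by
    rw [Finset.insert_comm]
    refine va_cl B {y₁, y₂} (by simp) (by simp; grind) ?_
    intro p hp; have := ht p hp; grind
  have s2 : EE (cl B a (insert y₁ {t, y₂})) (cl (cl B a {t, y₂}) (a + 1) {y₁, t}) := by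
    refine es_cl B {t, y₂} (by linarith) ?_ h3 (by simp) (by simp; grind)
    intro p hp; exact Or.inl (ha p hp)
  have s3 : EE (cl (cl B a {t, y₂}) (a + 1) {y₁, t}) (cl (cl B a {t, y₂}) b {y₁, t}) := by
    apply free_move _ (by simp)
    · rintro ⟨x, y⟩ hp
      have := ha (x, y)
      rw [mem_cl] at hp
      grind
    · rintro ⟨x, y⟩ hp
      have := hb (x, y)
      rw [mem_cl] at hp
      grind
    · intro d
      apply not_interleave_pair h3
      left
      intro q hq
      have := ht (d, q)
      simp only [mem_cl, Finset.mem_insert, Finset.mem_singleton] at hq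
      grind
  have e : ∀ s, cl (cl B a {s, y₂}) b {y₁, s} =
      Tr (cl (Tr (cl (cl B a {y₂}) b {y₁})) s {b, a}) := by
    intro s
    ext ⟨x, y⟩
    simp only [mem_cl, mem_Tr, Finset.mem_insert, Finset.mem_singleton]
    grind
  have s4 : EE (cl (cl B a {t, y₂}) b {y₁, t}) (cl (cl B a {t', y₂}) b {y₁, t'}) := by
    rw [e, e]
    apply Tr_EE
    apply free_move _ (by simp)
    · rintro ⟨x, y⟩ hp
      have := ht (y, x)
      simp only [mem_cl, mem_Tr, Finset.mem_singleton] at hp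
      grind
    · rintro ⟨x, y⟩ hp
      have := ht' (y, x)
      simp only [mem_cl, mem_Tr, Finset.mem_singleton] at hp
      grind
    · intro d
      apply not_interleave_pair hba
      right
      intro q hq
      have := ha (q, d)
      have := hb (q, d)
      simp only [mem_cl, mem_Tr, Finset.mem_singleton] at hq
      grind
  have s5 : EE (cl (cl B a {t', y₂}) b {y₁, t'}) (cl (cl B b {y₁, t'}) (b - 1) {t', y₂}) := by
    rw [cl_comm]
    apply free_move _ (by simp)
    · rintro ⟨x, y⟩ hp
      have := ha (x, y)
      rw [mem_cl] at hp
      grind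
    · rintro ⟨x, y⟩ hp
      have := hb (x, y)
      rw [mem_cl] at hp
      grind
    · intro d
      apply not_interleave_pair h2
      left
      intro q hq
      have := ht' (d, q)
      simp only [mem_cl, Finset.mem_insert, Finset.mem_singleton] at hq
      grind
  have s6 : EE (cl B (b - 1) (insert y₁ {t', y₂})) (cl (cl B b {y₁, t'}) (b - 1) {t', y₂}) := by
    rw [cl_comm]
    refine es_cl B {t', y₂} (by linarith) ?_ h1 (by simp) (by simp; grind)
    intro p hp; exact Or.inr (hb p hp)
  have s7 : EE (cl B (b - 1) {y₁, y₂}) (cl B (b - 1) (insert y₁ {t', y₂})) := by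
    rw [Finset.insert_comm]
    refine va_cl B {y₁, y₂} (by simp) (by simp; grind) ?_
    intro p hp; have := ht' p hp; grind
  have s8 : EE (cl B (b - 1) {y₁, y₂}) (cl B b {y₁, y₂}) := by
    apply comb_move
    intro p hp
    have := hb p hp
    grind
  exact s1.trans' (s2.trans' (s3.trans' (s4.trans' (s5.trans'
    (s6.symm'.trans' (s7.symm'.trans' s8))))))

theorem cyc_move (S : Finset ℝ) : ∀ (B : GRD) (a b : ℝ), (∀ p ∈ B, p.1 < a) →
    (∀ p ∈ B, b < p.1) → b < a → EE (cl B a S) (cl B b S) := by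
  induction S using Finset.induction_on_min with
  | empty => intro B a b _ _ _; simp only [cl, Finset.image_empty]; exact EE.refl' _
  | insert y₁ S hy ih =>
    intro B a b ha hb hba
    rcases S.eq_empty_or_nonempty with rfl | hS
    · apply free_move _ (by simp)
      · intro p hp; exact (ha p hp).ne
      · intro p hp; exact (hb p hp).ne'
      · intro d
        simp only [Finset.mem_insert, Finset.notMem_empty, or_false]
        rintro (⟨a1, h1, b1, h2, a2, h3, b2, h4, h5, h6, h7⟩ |
          ⟨b1, h2, a1, h1, b2, h4, a2, h3, h5, h6, h7⟩) <;> linarith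
    obtain ⟨y₂, hy₂, hmin⟩ := Finset.exists_min_image S id hS
    have hmin : ∀ y ∈ S, y₂ ≤ y := hmin
    have h12 := hy y₂ hy₂
    have s1 : EE (cl B a (insert y₁ S)) (cl (cl B a S) (a + 1) {y₁, y₂}) :=
      es_cl B S (by linarith) (fun p hp => Or.inl (ha p hp)) h12 hy₂ hmin
    have s2 : EE (cl (cl B a S) (a + 1) {y₁, y₂}) (cl (cl B a S) b {y₁, y₂}) := by
      apply two_move _ h12
      · rintro ⟨x, y⟩ hp
        have := ha (x, y)
        rw [mem_cl] at hp
        grind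
      · rintro ⟨x, y⟩ hp
        have := hb (x, y)
        rw [mem_cl] at hp
        grind
      · linarith
    have s3 : EE (cl (cl B a S) b {y₁, y₂}) (cl (cl B b {y₁, y₂}) (b - 1) S) := by
      rw [cl_comm]
      apply ih
      · rintro ⟨x, y⟩ hp
        have := ha (x, y)
        rw [mem_cl] at hp
        grind
      · rintro ⟨x, y⟩ hp
        have := hb (x, y)
        rw [mem_cl] at hp
        grind
      · linarith
    have s4 : EE (cl B (b - 1) (insert y₁ S)) (cl (cl B b {y₁, y₂}) (b - 1) S) := by
      rw [cl_comm]
      exact es_cl B S (by linarith) (fun p hp => Or.inr (hb p hp)) h12 hy₂ hmin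
    have s5 : EE (cl B (b - 1) (insert y₁ S)) (cl B b (insert y₁ S)) := by
      apply comb_move
      intro p hp
      have := hb p hp
      grind
    exact s1.trans' (s2.trans' (s3.trans' (s4.symm'.trans' s5)))

theorem cyc_col (R : GRD) (a b : ℝ)
    (h : ((∀ p ∈ R, p.1 ≤ a) ∧ ∀ p ∈ R, b < p.1) ∨ ((∀ p ∈ R, a ≤ p.1) ∧ ∀ p ∈ R, p.1 < b))
    (hp : ∃ p ∈ R, p.1 = a) : EE R (moveCol R a b) := by
  obtain ⟨S, hS⟩ : ∃ S : Finset ℝ, S = (R.filter (fun p => p.1 = a)).image Prod.snd := ⟨_, rfl⟩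
  obtain ⟨B, hB⟩ : ∃ B : GRD, B = R.filter (fun p => p.1 ≠ a) := ⟨_, rfl⟩
  have mS : ∀ y, y ∈ S ↔ (a, y) ∈ R := by
    intro y; simp [hS]
  have mB : ∀ p, p ∈ B ↔ p ∈ R ∧ p.1 ≠ a := by
    intro y; simp [hB]
  have hR : R = cl B a S := by
    ext ⟨x, y⟩
    simp only [mem_cl, mS, mB]
    grind
  have hR' : moveCol R a b = cl B b S := by
    rw [hR]
    unfold moveCol cl
    simp only [Finset.image_union, Finset.image_image]
    congr 1
    · conv_rhs => rw [← Finset.image_id (s := B)]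
      refine Finset.image_congr ?_
      intro p hp
      have := ((mB p).1 hp).2
      simp [this]
    · refine Finset.image_congr ?_
      intro p hp
      simp
  suffices hh : EE (cl B a S) (cl B b S) by rw [hR', hR]; exact hh
  obtain ⟨q, hq, hqa⟩ := hp
  rcases h with ⟨h1, h2⟩ | ⟨h1, h2⟩
  · apply cyc_move
    · intro p hp
      obtain ⟨h3, h4⟩ := (mB p).1 hp
      exact lt_of_le_of_ne (h1 p h3) h4
    · intro p hp
      exact h2 p ((mB p).1 hp).1
    · rw [← hqa]; exact h2 q hq
  · apply EE.symm'
    apply cyc_move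
    · intro p hp
      exact h2 p ((mB p).1 hp).1
    · intro p hp
      obtain ⟨h3, h4⟩ := (mB p).1 hp
      exact lt_of_le_of_ne (h1 p h3) h4.symm
    · rw [← hqa]; exact h2 q hq

theorem cyc_EE {R R' : GRD} (h : CyclicPermutation R R') : EE R R' := by
  rcases h with ⟨a, b, hp, h, rfl⟩ | ⟨a, b, ⟨⟨x, y⟩, hp, hpa⟩, h, rfl⟩
  · exact cyc_col R a b h hp
  · have key : EE (Tr R) (moveCol (Tr R) a b) := by
      apply cyc_col
      · rcases h with ⟨h1, h2⟩ | ⟨h1, h2⟩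
        · left
          exact ⟨fun ⟨x, y⟩ hp => h1 (y, x) (by simpa using hp),
            fun ⟨x, y⟩ hp => h2 (y, x) (by simpa using hp)⟩
        · right
          exact ⟨fun ⟨x, y⟩ hp => h1 (y, x) (by simpa using hp),
            fun ⟨x, y⟩ hp => h2 (y, x) (by simpa using hp)⟩
      · exact ⟨(y, x), by simpa using hp, hpa⟩
    have := Tr_EE key
    rwa [Tr_moveCol, Tr_Tr] at this

theorem stab_EE {R R' : GRD} (h : Stab true R R') : EE R R' := by
  obtain ⟨x, y, x', y', hxy, h, hx, hy, hx', hy', rfl⟩ := h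
  simp only [if_true] at h
  unfold strictlyBetween at hx hy
  have s1 : EE R (insert (x, y') R) := by
    refine EE.of (Or.inr (Or.inr (Or.inl ⟨(x, y'), ?_, rfl, Or.inl ⟨⟨_, hxy, rfl⟩, hy'⟩⟩)))
    intro hp
    exact hy' _ hp rfl
  refine s1.trans' (EE.of (Or.inr (Or.inl (Or.inl ?_))))
  rcases h with ⟨h1, h2⟩ | ⟨h1, h2⟩
  · refine ⟨x, y, y', x' - x, by linarith, h2, by simp [hxy], by simp, ?_, Or.inl ⟨?_, ?_⟩⟩
    · intro t ht
      have := hy (x, t)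
      simp only [Finset.mem_insert, Prod.mk.injEq] at ht
      grind
    · rintro ⟨u, v⟩ hp
      have := hx (u, v)
      have := hx' (u, v)
      simp only [Finset.mem_insert, Prod.mk.injEq] at hp
      grind
    · ext ⟨u, v⟩
      simp only [Finset.mem_insert, Finset.mem_erase, Prod.mk.injEq, if_true, add_sub_cancel, ne_eq]
      grind
  · refine ⟨x, y', y, x - x', by linarith, h2, by simp, by simp [hxy], ?_, Or.inr ⟨?_, ?_⟩⟩
    · intro t ht
      have := hy (x, t)
      simp only [Finset.mem_insert, Prod.mk.injEq] at ht
      grind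
    · rintro ⟨u, v⟩ hp
      have := hx (u, v)
      have := hx' (u, v)
      simp only [Finset.mem_insert, Prod.mk.injEq] at hp
      grind
    · ext ⟨u, v⟩
      simp only [Finset.mem_insert, Finset.mem_erase, Prod.mk.injEq, if_true, sub_sub_cancel, ne_eq]
      grind

theorem step_EE {R R' : GRD} (h : Step true R R') : EE R R' := by
  rcases h with (h | h | h | h | h | h) | h
  · exact cyc_EE h
  · exact EE.of (Or.inl h)
  · exact stab_EE h
  · exact (stab_EE h).symm'
  · exact EE.of (Or.inr (Or.inl h))
  · exact EE.of (Or.inr (Or.inr (Or.inl h)))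
  · exact EE.of (Or.inr (Or.inr (Or.inr h)))

theorem EE_step {R R' : GRD} (h : E0 R R') : Step true R R' := by
  rcases h with h | h | h | h
  · exact Or.inl (Or.inr (Or.inl h))
  · exact Or.inl (Or.inr (Or.inr (Or.inr (Or.inr (Or.inl h)))))
  · exact Or.inl (Or.inr (Or.inr (Or.inr (Or.inr (Or.inr h)))))
  · exact Or.inr h

/-- the equivalence relation on generalized rectangular diagrams generated
by the elementary moves of type L coincides with the equivalence relation generated by
commutations, end shifts of type L and vertex additions alone (diagrams being
identified up to combinatorial equivalence throughout). -/
theorem statement0 :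
    Relation.EqvGen (Step true) =
      Relation.EqvGen (fun R R' : GRD =>
        Commutation R R' ∨ EndShift true R R' ∨ VertexAddition R R' ∨ CombEquiv R R') := by
  change Relation.EqvGen (Step true) = EE
  funext R R'
  apply propext
  constructor
  · intro h
    induction h with
    | rel _ _ h => exact step_EE h
    | refl _ => exact EE.refl' _
    | symm _ _ _ ih => exact ih.symm'
    | trans _ _ _ _ _ ih1 ih2 => exact ih1.trans' ih2
  · intro h
    induction h with
    | rel _ _ h => exact Relation.EqvGen.rel _ _ (EE_step h)
    | refl _ => exact Relation.EqvGen.refl _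
    | symm _ _ _ ih => exact Relation.EqvGen.symm _ _ ih
    | trans _ _ _ _ _ ih1 ih2 => exact Relation.EqvGen.trans _ _ _ ih1 ih2

end RectDiag
end

section
/- If a generalized rectangular diagram R' is obtained from a generalized rectangular diagram R by a stabilization of type L, then R' can be obtained from R by performing one vertex addition followed by one end shift of type L. -/
namespace RectDiag

/-- a stabilization of type L is the composition of one vertex addition
followed by one end shift of type L (up to the identification of combinatorially
equivalent diagrams). -/
theorem statement2 (R R' : GRD) (h : Stab true R R') :
    ∃ S T : GRD, VertexAddition R S ∧ EndShift true S T ∧ CombEquiv T R' := by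
  unfold Stab at h
  obtain ⟨x, y, x', y', hxy, hd, hx, hy, hnx, hny, rfl⟩ := h
  simp only [if_true] at hd
  refine ⟨insert (x, y') R, insert (x', y) (insert (x, y') (insert (x', y') (R.erase (x, y)))), ⟨(x, y'), fun h => hny _ h rfl, rfl,
    Or.inl ⟨⟨_, hxy, rfl⟩, hny⟩⟩, ?_, id, id, strictMono_id, strictMono_id, ?_⟩
  rotate_left
  · simp only [id, Prod.mk.eta, Finset.image_id']
  have hcol : ∀ t : ℝ, (x, t) ∈ insert (x, y') R → t = y' ∨ ¬ strictlyBetween y t y' := by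
    intro t ht
    rcases Finset.mem_insert.1 ht with h | h
    · exact Or.inl (congrArg Prod.snd h)
    · exact Or.inr (hy _ h)
  have hne : (x, y') ≠ (x, y) := by
    intro h
    exact hny _ hxy (congrArg Prod.snd h).symm
  left
  rcases hd with ⟨h1, h2⟩ | ⟨h1, h2⟩
  · refine ⟨x, y, y', x' - x, by linarith, h2, by simp [hxy], by simp, ?_, Or.inl ⟨?_, ?_⟩⟩
    · rintro t ht ⟨ha, hb⟩
      rcases hcol t ht with h | h
      · exact absurd hb (by simp [h])
      · exact h (Or.inl ⟨ha, hb⟩)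
    · rintro p hp ⟨ha, hb⟩
      rcases Finset.mem_insert.1 hp with h | h
      · simp [h] at ha
      · exact hx p h (Or.inl ⟨ha, lt_of_le_of_ne (by linarith) (hnx p h)⟩)
    · simp only [if_true, add_sub_cancel, Finset.erase_insert_of_ne hne]
      rw [Finset.insert_comm (x, y')]
  · refine ⟨x, y', y, x - x', by linarith, h2, by simp, by simp [hxy], ?_, Or.inr ⟨?_, ?_⟩⟩
    · rintro t ht ⟨ha, hb⟩
      rcases hcol t ht with h | h
      · exact absurd ha (by simp [h])
      · exact h (Or.inr ⟨ha, hb⟩)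
    · rintro p hp ⟨ha, hb⟩
      rcases Finset.mem_insert.1 hp with h | h
      · simp [h] at hb
      · exact hx p h (Or.inr ⟨lt_of_le_of_ne (by linarith) (hnx p h).symm, hb⟩)
    · simp only [if_true, sub_sub_cancel, Finset.erase_insert_of_ne hne]
      rw [Finset.insert_comm (x, y'), Finset.insert_comm (x', y)]

end RectDiag
end

section
/- If a generalized rectangular diagram R' is obtained from a generalized rectangular diagram R by a cyclic permutation, then R' can be obtained from R by a finite sequence of commutations, stabilizations of type L, destabilizations of type L, end shifts of type L and vertex additions (i.e., elementary moves of type L other than cyclic permutations). -/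
namespace RectDiag

/-- allowed step -/
def LS (A B : GRD) : Prop :=
  Commutation A B ∨ Stab true A B ∨ Stab true B A ∨ EndShift true A B ∨
        VertexAddition A B ∨ CombEquiv A B

/-- transposition -/
noncomputable def TT (R : GRD) : GRD := R.image Prod.swap
/-- rotation -/
noncomputable def NN (R : GRD) : GRD := R.image (fun p => (-p.1, -p.2))

theorem mem_TT (R : GRD) (x y : ℝ) : (x, y) ∈ TT R ↔ (y, x) ∈ R := by
  unfold TT; simp

theorem mem_NN (R : GRD) (x y : ℝ) : (x, y) ∈ NN R ↔ (-x, -y) ∈ R := by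
  unfold NN; simp only [Finset.mem_image, Prod.mk.injEq, Prod.exists]
  constructor
  · rintro ⟨a, b, h, rfl, rfl⟩; simpa using h
  · intro h; exact ⟨-x, -y, h, by simp, by simp⟩

theorem TT_TT (R : GRD) : TT (TT R) = R := by
  ext ⟨x, y⟩; simp [mem_TT]

theorem NN_NN (R : GRD) : NN (NN R) = R := by
  ext ⟨x, y⟩; simp [mem_NN]

theorem mem_moveCol (R : GRD) (a b x y : ℝ) :
    (x, y) ∈ moveCol R a b ↔ (x ≠ a ∧ (x, y) ∈ R) ∨ (x = b ∧ (a, y) ∈ R) := by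
  unfold moveCol
  simp only [Finset.mem_image, Prod.exists]
  constructor
  · rintro ⟨p, q, h, h2⟩
    split_ifs at h2 <;> grind
  · rintro (⟨h, h2⟩ | ⟨rfl, h⟩)
    · exact ⟨x, y, h2, by simp [h]⟩
    · exact ⟨a, y, h, by simp⟩

theorem mem_moveRow (R : GRD) (a b x y : ℝ) :
    (x, y) ∈ moveRow R a b ↔ (y ≠ a ∧ (x, y) ∈ R) ∨ (y = b ∧ (x, a) ∈ R) := by
  unfold moveRow
  simp only [Finset.mem_image, Prod.exists]
  constructor
  · rintro ⟨p, q, h, h2⟩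
    split_ifs at h2 <;> grind
  · rintro (⟨h, h2⟩ | ⟨rfl, h⟩)
    · exact ⟨x, y, h2, by simp [h]⟩
    · exact ⟨x, a, h, by simp⟩

theorem mem_swapCols (R : GRD) (a b x y : ℝ) :
    (x, y) ∈ swapCols R a b ↔ (x ≠ a ∧ x ≠ b ∧ (x, y) ∈ R) ∨ (x = b ∧ (a, y) ∈ R)
      ∨ (x = a ∧ (b, y) ∈ R) := by
  unfold swapCols
  simp only [Finset.mem_image, Prod.exists]
  constructor
  · rintro ⟨p, q, h, h2⟩
    split_ifs at h2 <;> grind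
  · rintro (⟨h, h3, h2⟩ | ⟨rfl, h⟩ | ⟨rfl, h⟩)
    · exact ⟨x, y, h2, by simp [h, h3]⟩
    · exact ⟨a, y, h, by simp⟩
    · refine ⟨b, y, h, ?_⟩
      by_cases hb : b = x <;> simp [hb]

theorem mem_swapRows (R : GRD) (a b x y : ℝ) :
    (x, y) ∈ swapRows R a b ↔ (y ≠ a ∧ y ≠ b ∧ (x, y) ∈ R) ∨ (y = b ∧ (x, a) ∈ R)
      ∨ (y = a ∧ (x, b) ∈ R) := by
  unfold swapRows
  simp only [Finset.mem_image, Prod.exists]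
  constructor
  · rintro ⟨p, q, h, h2⟩
    split_ifs at h2 <;> grind
  · rintro (⟨h, h3, h2⟩ | ⟨rfl, h⟩ | ⟨rfl, h⟩)
    · exact ⟨x, y, h2, by simp [h, h3]⟩
    · exact ⟨x, a, h, by simp⟩
    · refine ⟨x, b, h, ?_⟩
      by_cases hb : b = y <;> simp [hb]

theorem Commutation_TT {A B : GRD} (h : Commutation A B) : Commutation (TT A) (TT B) := by
  rcases h with ⟨a, b, hab, ⟨⟨p1, p2⟩, hp, hpa⟩, ⟨⟨q1, q2⟩, hq, hqb⟩, h1, h2, rfl⟩ |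
    ⟨a, b, hab, ⟨⟨p1, p2⟩, hp, hpa⟩, ⟨⟨q1, q2⟩, hq, hqb⟩, h1, h2, rfl⟩
  · right
    refine ⟨a, b, hab, ⟨(p2, p1), (mem_TT _ _ _).2 hp, hpa⟩,
      ⟨(q2, q1), (mem_TT _ _ _).2 hq, hqb⟩, ?_, ?_, ?_⟩
    · rintro ⟨x, y⟩ hx; exact h1 _ ((mem_TT _ _ _).1 hx)
    · simpa only [mem_TT] using h2
    · ext ⟨x, y⟩; simp only [mem_TT, mem_swapCols, mem_swapRows]
  · left
    refine ⟨a, b, hab, ⟨(p2, p1), (mem_TT _ _ _).2 hp, hpa⟩,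
      ⟨(q2, q1), (mem_TT _ _ _).2 hq, hqb⟩, ?_, ?_, ?_⟩
    · rintro ⟨x, y⟩ hx; exact h1 _ ((mem_TT _ _ _).1 hx)
    · simpa only [mem_TT] using h2
    · ext ⟨x, y⟩; simp only [mem_TT, mem_swapCols, mem_swapRows]

theorem Interleave_neg {A B : ℝ → Prop}
    (h : Interleave (fun y => A (-y)) (fun y => B (-y))) : Interleave B A := by
  rcases h with ⟨a, ha, b, hb, c, hc, d, hd, h1, h2, h3⟩ |
    ⟨a, ha, b, hb, c, hc, d, hd, h1, h2, h3⟩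
  · left; exact ⟨-d, hd, -c, hc, -b, hb, -a, ha, by linarith, by linarith, by linarith⟩
  · right; exact ⟨-d, hd, -c, hc, -b, hb, -a, ha, by linarith, by linarith, by linarith⟩

theorem Commutation_NN {A B : GRD} (h : Commutation A B) : Commutation (NN A) (NN B) := by
  rcases h with ⟨a, b, hab, ⟨⟨p1, p2⟩, hp, hpa⟩, ⟨⟨q1, q2⟩, hq, hqb⟩, h1, h2, rfl⟩ |
    ⟨a, b, hab, ⟨⟨p1, p2⟩, hp, hpa⟩, ⟨⟨q1, q2⟩, hq, hqb⟩, h1, h2, rfl⟩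
  · left
    refine ⟨-b, -a, by linarith, ⟨(-q1, -q2), by simpa [mem_NN] using hq, by simpa using hqb⟩,
      ⟨(-p1, -p2), by simpa [mem_NN] using hp, by simpa using hpa⟩, ?_, ?_, ?_⟩
    · rintro ⟨x, y⟩ hx ⟨h3, h4⟩
      exact h1 _ ((mem_NN _ _ _).1 hx) ⟨by dsimp at *; linarith, by dsimp at *; linarith⟩
    · intro h; apply h2; simp only [mem_NN, neg_neg] at h
      exact Interleave_neg (A := fun y => (b, y) ∈ A) (B := fun y => (a, y) ∈ A) h
    · ext ⟨x, y⟩; simp only [mem_NN, mem_swapCols, neg_neg]; grind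
  · right
    refine ⟨-b, -a, by linarith, ⟨(-q1, -q2), by simpa [mem_NN] using hq, by simpa using hqb⟩,
      ⟨(-p1, -p2), by simpa [mem_NN] using hp, by simpa using hpa⟩, ?_, ?_, ?_⟩
    · rintro ⟨x, y⟩ hx ⟨h3, h4⟩
      exact h1 _ ((mem_NN _ _ _).1 hx) ⟨by dsimp at *; linarith, by dsimp at *; linarith⟩
    · intro h; apply h2; simp only [mem_NN, neg_neg] at h
      exact Interleave_neg (A := fun y => (y, b) ∈ A) (B := fun y => (y, a) ∈ A) h
    · ext ⟨x, y⟩; simp only [mem_NN, mem_swapRows, neg_neg]; grind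

theorem Stab_TT {A B : GRD} (h : Stab true A B) : Stab true (TT A) (TT B) := by
  obtain ⟨x, y, x', y', h0, h1, h2, h3, h4, h5, rfl⟩ := h
  refine ⟨y, x, y', x', (mem_TT _ _ _).2 h0, by simp at h1 ⊢; tauto, ?_, ?_, ?_, ?_, ?_⟩
  · rintro ⟨p, q⟩ hp; exact h3 _ ((mem_TT _ _ _).1 hp)
  · rintro ⟨p, q⟩ hp; exact h2 _ ((mem_TT _ _ _).1 hp)
  · rintro ⟨p, q⟩ hp; exact h5 _ ((mem_TT _ _ _).1 hp)
  · rintro ⟨p, q⟩ hp; exact h4 _ ((mem_TT _ _ _).1 hp)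
  · ext ⟨p, q⟩; simp only [mem_TT, Finset.mem_insert, Finset.mem_erase, Prod.mk.injEq, ne_eq]; tauto

theorem Stab_NN {A B : GRD} (h : Stab true A B) : Stab true (NN A) (NN B) := by
  obtain ⟨x, y, x', y', h0, h1, h2, h3, h4, h5, rfl⟩ := h
  refine ⟨-x, -y, -x', -y', by simpa [mem_NN] using h0, by simp at h1 ⊢; tauto, ?_, ?_, ?_, ?_, ?_⟩
  · rintro ⟨p, q⟩ hp h; apply h2 _ ((mem_NN _ _ _).1 hp); unfold strictlyBetween at *; grind
  · rintro ⟨p, q⟩ hp h; apply h3 _ ((mem_NN _ _ _).1 hp); unfold strictlyBetween at *; grind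
  · rintro ⟨p, q⟩ hp h; apply h4 _ ((mem_NN _ _ _).1 hp); grind
  · rintro ⟨p, q⟩ hp h; apply h5 _ ((mem_NN _ _ _).1 hp); grind
  · ext ⟨p, q⟩
    simp only [mem_NN, Finset.mem_insert, Finset.mem_erase, Prod.mk.injEq, ne_eq, neg_eq_iff_eq_neg]

theorem EndShift_TT {A B : GRD} (h : EndShift true A B) : EndShift true (TT A) (TT B) := by
  rcases h with ⟨a, u, v, e, he, huv, hu, hv, h1, h⟩ | ⟨a, u, v, e, he, huv, hu, hv, h1, h⟩
  · right
    refine ⟨a, u, v, e, he, huv, (mem_TT _ _ _).2 hu, (mem_TT _ _ _).2 hv, ?_, ?_⟩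
    · simpa only [mem_TT] using h1
    rcases h with ⟨h2, rfl⟩ | ⟨h2, rfl⟩
    · left; constructor
      · rintro ⟨p, q⟩ hp; exact h2 _ ((mem_TT _ _ _).1 hp)
      · ext ⟨p, q⟩; simp [mem_TT]; tauto
    · right; constructor
      · rintro ⟨p, q⟩ hp; exact h2 _ ((mem_TT _ _ _).1 hp)
      · ext ⟨p, q⟩; simp [mem_TT]; tauto
  · left
    refine ⟨a, u, v, e, he, huv, (mem_TT _ _ _).2 hu, (mem_TT _ _ _).2 hv, ?_, ?_⟩
    · simpa only [mem_TT] using h1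
    rcases h with ⟨h2, rfl⟩ | ⟨h2, rfl⟩
    · left; constructor
      · rintro ⟨p, q⟩ hp; exact h2 _ ((mem_TT _ _ _).1 hp)
      · ext ⟨p, q⟩; simp [mem_TT]; tauto
    · right; constructor
      · rintro ⟨p, q⟩ hp; exact h2 _ ((mem_TT _ _ _).1 hp)
      · ext ⟨p, q⟩; simp [mem_TT]; tauto

theorem EndShift_NN {A B : GRD} (h : EndShift true A B) : EndShift true (NN A) (NN B) := by
  rcases h with ⟨a, u, v, e, he, huv, hu, hv, h1, h⟩ | ⟨a, u, v, e, he, huv, hu, hv, h1, h⟩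
  · left
    refine ⟨-a, -v, -u, e, he, by linarith, by simpa [mem_NN] using hv,
      by simpa [mem_NN] using hu, ?_, ?_⟩
    · intro t ht; simp only [mem_NN, neg_neg] at ht; have := h1 _ ht; grind
    rcases h with ⟨h2, rfl⟩ | ⟨h2, rfl⟩
    · right; constructor
      · rintro ⟨p, q⟩ hp; have := h2 _ ((mem_NN _ _ _).1 hp); grind
      · ext ⟨p, q⟩; simp [mem_NN]; grind
    · left; constructor
      · rintro ⟨p, q⟩ hp; have := h2 _ ((mem_NN _ _ _).1 hp); grind
      · ext ⟨p, q⟩; simp [mem_NN]; grind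
  · right
    refine ⟨-a, -v, -u, e, he, by linarith, by simpa [mem_NN] using hv,
      by simpa [mem_NN] using hu, ?_, ?_⟩
    · intro t ht; simp only [mem_NN, neg_neg] at ht; have := h1 _ ht; grind
    rcases h with ⟨h2, rfl⟩ | ⟨h2, rfl⟩
    · right; constructor
      · rintro ⟨p, q⟩ hp; have := h2 _ ((mem_NN _ _ _).1 hp); grind
      · ext ⟨p, q⟩; simp [mem_NN]; grind
    · left; constructor
      · rintro ⟨p, q⟩ hp; have := h2 _ ((mem_NN _ _ _).1 hp); grind
      · ext ⟨p, q⟩; simp [mem_NN]; grind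

theorem VA_TT {A B : GRD} (h : VertexAddition A B) : VertexAddition (TT A) (TT B) := by
  obtain ⟨⟨x, y⟩, h1, rfl, h⟩ := h
  refine ⟨(y, x), by simpa [mem_TT] using h1, ?_, ?_⟩
  · ext ⟨p, q⟩; simp [mem_TT]; tauto
  · simp only [Prod.exists, Prod.forall, mem_TT] at h ⊢; grind

theorem VA_NN {A B : GRD} (h : VertexAddition A B) : VertexAddition (NN A) (NN B) := by
  obtain ⟨⟨x, y⟩, h1, rfl, h⟩ := h
  refine ⟨(-x, -y), by simpa [mem_NN] using h1, ?_, ?_⟩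
  · ext ⟨p, q⟩; simp [mem_NN, neg_eq_iff_eq_neg]
  · rcases h with ⟨⟨⟨p, q⟩, hp, hw⟩, h⟩ | ⟨⟨⟨p, q⟩, hp, hw⟩, h⟩
    · left
      refine ⟨⟨(-p, -q), by simpa [mem_NN] using hp, by simpa using hw⟩, ?_⟩
      rintro ⟨p, q⟩ hp h'; exact h _ ((mem_NN _ _ _).1 hp) (by simp at h' ⊢; linarith)
    · right
      refine ⟨⟨(-p, -q), by simpa [mem_NN] using hp, by simpa using hw⟩, ?_⟩
      rintro ⟨p, q⟩ hp h'; exact h _ ((mem_NN _ _ _).1 hp) (by simp at h' ⊢; linarith)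

theorem CE_TT {A B : GRD} (h : CombEquiv A B) : CombEquiv (TT A) (TT B) := by
  obtain ⟨f, g, hf, hg, rfl⟩ := h
  refine ⟨g, f, hg, hf, ?_⟩
  unfold TT; rw [Finset.image_image, Finset.image_image]; rfl

theorem CE_NN {A B : GRD} (h : CombEquiv A B) : CombEquiv (NN A) (NN B) := by
  obtain ⟨f, g, hf, hg, rfl⟩ := h
  refine ⟨fun x => - f (-x), fun x => - g (-x), ?_, ?_, ?_⟩
  · intro x y h; simpa using hf (by simpa using h)
  · intro x y h; simpa using hg (by simpa using h)
  unfold NN; rw [Finset.image_image, Finset.image_image]; simp [Function.comp_def]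

theorem LS_TT {A B : GRD} (h : LS A B) : LS (TT A) (TT B) := by
  rcases h with h | h | h | h | h | h
  · exact Or.inl (Commutation_TT h)
  · exact Or.inr (Or.inl (Stab_TT h))
  · exact Or.inr (Or.inr (Or.inl (Stab_TT h)))
  · exact Or.inr (Or.inr (Or.inr (Or.inl (EndShift_TT h))))
  · exact Or.inr (Or.inr (Or.inr (Or.inr (Or.inl (VA_TT h)))))
  · exact Or.inr (Or.inr (Or.inr (Or.inr (Or.inr (CE_TT h)))))

theorem LS_NN {A B : GRD} (h : LS A B) : LS (NN A) (NN B) := by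
  rcases h with h | h | h | h | h | h
  · exact Or.inl (Commutation_NN h)
  · exact Or.inr (Or.inl (Stab_NN h))
  · exact Or.inr (Or.inr (Or.inl (Stab_NN h)))
  · exact Or.inr (Or.inr (Or.inr (Or.inl (EndShift_NN h))))
  · exact Or.inr (Or.inr (Or.inr (Or.inr (Or.inl (VA_NN h)))))
  · exact Or.inr (Or.inr (Or.inr (Or.inr (Or.inr (CE_NN h)))))

abbrev LSS := Relation.ReflTransGen LS

theorem LSS_TT {A B : GRD} (h : LSS A B) : LSS (TT A) (TT B) :=
  Relation.ReflTransGen.lift TT (fun _ _ h => LS_TT h) _ _ h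

theorem LSS_NN {A B : GRD} (h : LSS A B) : LSS (NN A) (NN B) :=
  Relation.ReflTransGen.lift NN (fun _ _ h => LS_NN h) _ _ h

theorem extend_mono (S : Finset ℝ) : ∀ h : ℝ → ℝ, (∀ x ∈ S, ∀ y ∈ S, x < y → h x < h y) →
    ∃ f : ℝ → ℝ, StrictMono f ∧ ∀ x ∈ S, f x = h x := by
  induction S using Finset.induction_on_max with
  | empty => intro h _; exact ⟨id, strictMono_id, by simp⟩
  | insert m S hm ih =>
    intro h hh
    obtain ⟨f, hf, hfe⟩ := ih h (fun x hx y hy => hh x (by simp [hx]) y (by simp [hy]))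
    rcases S.eq_empty_or_nonempty with rfl | hne
    · refine ⟨fun x => x - m + h m, ?_, by simp⟩
      intro x y hxy; simpa using hxy
    · have hsm := hm _ (S.max'_mem hne)
      have hle : ∀ x ∈ S, x ≤ S.max' hne := fun x hx => S.le_max' x hx
      have hs := S.max'_mem hne
      generalize S.max' hne = s at *
      have hhs : h s < h m := hh s (by simp [hs]) m (by simp) hsm
      have hk : 0 < (h m - h s) / (m - s) := div_pos (by linarith) (by linarith)
      have hkm : (h m - h s) / (m - s) * (m - s) = h m - h s :=
        div_mul_cancel₀ _ (by linarith)
      generalize (h m - h s) / (m - s) = k at *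
      refine ⟨fun x => if x ≤ s then f x else h s + k * (x - s), ?_, ?_⟩
      · intro x y hxy
        have h1 := hfe s hs
        have h2 := hf.monotone
        dsimp only
        split_ifs with hx hy hy
        · exact hf hxy
        · have := h2 hx
          have : 0 < k * (y - s) := mul_pos hk (by linarith)
          linarith
        · linarith
        · have : k * (x - s) < k * (y - s) := by gcongr
          linarith
      · intro x hx
        rcases Finset.mem_insert.1 hx with rfl | hx
        · simp only [not_le.2 hsm, if_false]; linarith
        · simp only [hle x hx, if_true]; exact hfe x hx

theorem ce_col (R : GRD) (g : ℝ → ℝ)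
    (hg : ∀ p ∈ R, ∀ q ∈ R, p.1 < q.1 → g p.1 < g q.1) :
    CombEquiv R (R.image fun p => (g p.1, p.2)) := by
  obtain ⟨f, hf, hfe⟩ := extend_mono (R.image Prod.fst) g (by
    intro x hx y hy h
    obtain ⟨p, hp, rfl⟩ := Finset.mem_image.1 hx
    obtain ⟨q, hq, rfl⟩ := Finset.mem_image.1 hy
    exact hg p hp q hq h)
  refine ⟨f, id, hf, strictMono_id, ?_⟩
  apply Finset.image_congr
  intro p hp
  have := hfe p.1 (Finset.mem_image_of_mem _ hp)
  simp [this]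

/-- slide a column inside a gap -/
theorem slide_col (R : GRD) (c d : ℝ)
    (h : ∀ p ∈ R, p.1 ≠ c → (p.1 < c ∧ p.1 < d) ∨ (c < p.1 ∧ d < p.1)) :
    LSS R (moveCol R c d) := by
  apply Relation.ReflTransGen.single
  have := ce_col R (fun x => if x = c then d else x) (by
    intro p hp q hq hpq
    have h1 := h p hp
    have h2 := h q hq
    grind)
  refine Or.inr (Or.inr (Or.inr (Or.inr (Or.inr ?_))))
  convert this using 1
  unfold moveCol
  apply Finset.image_congr
  rintro ⟨p, q⟩ hp
  dsimp only
  split_ifs <;> rfl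

theorem Interleave_symm {A B : ℝ → Prop} (h : Interleave A B) : Interleave B A := Or.symm h

theorem pass_col (R : GRD) (c e d : ℝ) (ho : (c < e ∧ e < d) ∨ (d < e ∧ e < c))
    (hc : ∃ p ∈ R, p.1 = c) (he : ∃ p ∈ R, p.1 = e)
    (hI : ¬ Interleave (fun y => (c, y) ∈ R) (fun y => (e, y) ∈ R))
    (h : ∀ p ∈ R, p.1 ≠ c → p.1 ≠ e →
      (p.1 < c ∧ p.1 < d) ∨ (c < p.1 ∧ d < p.1)) :
    LSS R (moveCol R c d) := by
  have h1 : LSS R (swapCols R c e) := by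
    apply Relation.ReflTransGen.single
    left; left
    rcases ho with ho | ho
    · refine ⟨c, e, ho.1, hc, he, ?_, hI, rfl⟩
      intro p hp hh
      have := h p hp
      grind
    · refine ⟨e, c, ho.2, he, hc, ?_, fun hh => hI (Interleave_symm hh), ?_⟩
      · intro p hp hh
        have := h p hp
        grind
      · ext ⟨x, y⟩; simp only [mem_swapCols]; tauto
  refine h1.trans (Relation.ReflTransGen.single ?_)
  have := ce_col (swapCols R c e) (fun x => if x = e then d else if x = c then e else x) (by
    rintro ⟨p, p2⟩ hp ⟨q, q2⟩ hq hpq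
    have h1 := h (p, p2)
    have h2 := h (q, q2)
    simp only [mem_swapCols] at hp hq
    grind)
  refine Or.inr (Or.inr (Or.inr (Or.inr (Or.inr ?_))))
  convert this using 1
  unfold moveCol swapCols
  rw [Finset.image_image]
  apply Finset.image_congr
  rintro ⟨p, q⟩ hp
  simp only [Function.comp]
  grind

theorem gap (S : Finset ℝ) (e c : ℝ) (h : e < c) :
    ∃ d, e < d ∧ d < c ∧ ∀ s ∈ S, ¬ (e < s ∧ s ≤ d) := by
  induction S using Finset.induction_on with
  | empty => exact ⟨(e + c) / 2, by linarith, by linarith, by simp⟩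
  | insert s S _ ih =>
    obtain ⟨d, h1, h2, h3⟩ := ih
    by_cases hs : e < s ∧ s ≤ d
    · refine ⟨(e + s) / 2, by linarith, by linarith, ?_⟩
      intro t ht
      rcases Finset.mem_insert.1 ht with rfl | ht
      · intro h; linarith
      · intro h; exact h3 t ht ⟨h.1, by linarith⟩
    · refine ⟨d, h1, h2, ?_⟩
      intro t ht
      rcases Finset.mem_insert.1 ht with rfl | ht
      · exact hs
      · exact h3 t ht

theorem travel (n : ℕ) : ∀ (R : GRD) (c d : ℝ), d < c →
    (R.filter fun p => d < p.1 ∧ p.1 < c).card = n →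
    (∃ p ∈ R, p.1 = c) → (∀ p ∈ R, p.1 ≠ d) →
    (∀ e, d < e → e < c → ¬ Interleave (fun y => (c, y) ∈ R) (fun y => (e, y) ∈ R)) →
    LSS R (moveCol R c d) := by
  induction n using Nat.strong_induction_on with
  | _ n ih =>
  intro R c d hdc hn hc hd hI
  rcases (R.filter fun p => d < p.1 ∧ p.1 < c).eq_empty_or_nonempty with h0 | hne
  · apply slide_col
    intro p hp hpc
    have h1 := hd p hp
    have h2 := Finset.filter_eq_empty_iff.1 h0 hp
    grind
  · obtain ⟨q, hq, hmin⟩ := Finset.exists_min_image _ Prod.fst hne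
    simp only [Finset.mem_filter] at hq hmin
    obtain ⟨hqR, hdq, hqc⟩ := hq
    obtain ⟨d', h1, h2, h3⟩ := gap (R.image Prod.fst) q.1 c hqc
    have h3' : ∀ p ∈ R, ¬ (q.1 < p.1 ∧ p.1 ≤ d') := fun p hp =>
      h3 _ (Finset.mem_image_of_mem _ hp)
    have hd' : ∀ p ∈ R, p.1 ≠ d' := fun p hp he => h3' p hp ⟨by rw [he]; exact h1, he.le⟩
    have hlt : (R.filter fun p => d' < p.1 ∧ p.1 < c).card < n := by
      rw [← hn]
      apply Finset.card_lt_card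
      rw [Finset.ssubset_iff_of_subset]
      · exact ⟨q, by simp [hqR, hdq, hqc], by simp; intros; linarith⟩
      · intro p; simp only [Finset.mem_filter]; grind
    have s1 := ih _ hlt R c d' h2 rfl hc hd' (fun e he => hI e (by linarith))
    refine s1.trans ?_
    have hm : moveCol R c d = moveCol (moveCol R c d') d' d := by
      ext ⟨x, y⟩
      have := hd' (x, y)
      have := hd' (d', y)
      simp only [mem_moveCol]; grind
    rw [hm]
    apply pass_col _ d' q.1 d (Or.inr ⟨hdq, h1⟩)
    · obtain ⟨⟨x, y⟩, hp, rfl⟩ := hc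
      exact ⟨(d', y), by simp [mem_moveCol, hp], rfl⟩
    · exact ⟨q, by rw [← Prod.mk.eta (p := q), mem_moveCol]; left; exact ⟨by simp; linarith, hqR⟩, rfl⟩
    · have e1 : (fun y => (d', y) ∈ moveCol R c d') = (fun y => (c, y) ∈ R) := by
        ext y; have := hd' (d', y); simp only [mem_moveCol]; grind
      have e2 : (fun y => (q.1, y) ∈ moveCol R c d') = (fun y => (q.1, y) ∈ R) := by
        ext y; simp only [mem_moveCol]; grind
      rw [e1, e2]
      exact hI _ hdq hqc
    · rintro ⟨x, y⟩ hp hx1 hx2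
      rw [mem_moveCol] at hp
      have hp' : x ≠ c ∧ (x, y) ∈ R := by grind
      have k1 := hmin (x, y) 
      have k2 := h3' _ hp'.2
      have k3 := hd _ hp'.2
      grind

theorem pass_row (R : GRD) (c e d : ℝ) (ho : (c < e ∧ e < d) ∨ (d < e ∧ e < c))
    (hc : ∃ p ∈ R, p.2 = c) (he : ∃ p ∈ R, p.2 = e)
    (hI : ¬ Interleave (fun y => (y, c) ∈ R) (fun y => (y, e) ∈ R))
    (h : ∀ p ∈ R, p.2 ≠ c → p.2 ≠ e →
      (p.2 < c ∧ p.2 < d) ∨ (c < p.2 ∧ d < p.2)) :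
    LSS R (moveRow R c d) := by
  have := LSS_TT (pass_col (TT R) c e d ho
    (by obtain ⟨⟨x, y⟩, hp, rfl⟩ := hc; exact ⟨(y, x), by simpa [mem_TT] using hp, rfl⟩)
    (by obtain ⟨⟨x, y⟩, hp, rfl⟩ := he; exact ⟨(y, x), by simpa [mem_TT] using hp, rfl⟩)
    (by simpa only [mem_TT] using hI)
    (by rintro ⟨x, y⟩ hp; exact h _ ((mem_TT _ _ _).1 hp)))
  rw [TT_TT] at this
  convert this using 1
  ext ⟨x, y⟩; simp [mem_TT, mem_moveCol, mem_moveRow]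

theorem prop_aux (pd pb qu qy qw k : Prop) (h1 : k → ¬ pd) (h2 : k → ¬ (pb ∧ qy))
    (h3 : qu → ¬ qy) :
    (pd ∧ qw ∨ pb ∧ qw ∨ ¬ (pd ∧ qu) ∧ (pd ∧ qu ∨ pd ∧ qy ∨ k)) ↔
    (pd ∧ qy ∨ pb ∧ qw ∨ pd ∧ qw ∨ ¬ (pb ∧ qy) ∧ (pb ∧ qy ∨ k)) := by
  by_cases k <;> by_cases pd <;> by_cases pb <;> by_cases qu <;> by_cases qy <;> simp_all

/-- transfer a vertex from the rightmost to the leftmost column -/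
theorem transfer (R : GRD) (a b u y : ℝ) (hba : b < a) (huy : u < y)
    (hau : (a, u) ∈ R) (hbu : (b, u) ∈ R) (hay : (a, y) ∈ R) (hby : (b, y) ∉ R)
    (hb : ∀ p ∈ R, b ≤ p.1) (hr : ∀ p ∈ R, ¬ (u < p.2 ∧ p.2 < y)) :
    LSS R (insert (b, y) (R.erase (a, y))) := by
  -- choose the small shift
  obtain ⟨e, he0, hec, heR⟩ : ∃ e, 0 < e ∧ b < a - e ∧ ∀ p ∈ R, ¬ (a - e ≤ p.1 ∧ p.1 < a) := by
    obtain ⟨d, h1, h2, h3⟩ := gap ((NN R).image Prod.fst) (-a) (-b) (by linarith)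
    refine ⟨a + d, by linarith, by linarith, ?_⟩
    rintro ⟨x, z⟩ hp hh
    refine h3 (-x) (Finset.mem_image.2 ⟨(-x, -z), by simpa [mem_NN] using hp, rfl⟩) ?_
    dsimp at hh
    constructor <;> linarith
  have hce : ∀ z, (a - e, z) ∉ R := fun z hz => heR _ hz (by simp; exact he0)
  have hdR : ∀ z, (b - 1, z) ∉ R := fun z hz => by have := hb _ hz; simp at this; linarith
  set c := a - e with hcdef
  set R0 := R.erase (a, y) with hR0
  have hR0R : ∀ p ∈ R0, p ∈ R := fun p hp => Finset.mem_of_mem_erase hp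
  have s1 : LSS R (insert (c, u) (insert (c, y) R0)) := by
    apply Relation.ReflTransGen.single
    refine Or.inr (Or.inr (Or.inr (Or.inl (Or.inl ⟨a, u, y, e, he0, huy, hau, hay, ?_, Or.inr ⟨heR, rfl⟩⟩))))
    intro t ht; exact hr _ ht
  have s2 : LSS (insert (c, u) (insert (c, y) R0)) (insert (b - 1, u) (insert (b - 1, y) R0)) := by
    have := travel _ (insert (c, u) (insert (c, y) R0)) c (b - 1) (by linarith) rfl
      ⟨(c, u), by simp, rfl⟩ (by
        rintro ⟨p, q⟩ hp
        have h1 := hR0R (p, q)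
        have h2 := hdR q
        simp only [Finset.mem_insert, Prod.mk.injEq] at hp
        grind) (by
        intro f hf1 hf2 hI
        have key : ∀ t, (f, t) ∈ insert (c, u) (insert (c, y) R0) → ¬ (u < t ∧ t < y) := by
          intro t ht
          simp only [Finset.mem_insert, Prod.mk.injEq] at ht
          have := hR0R (f, t)
          have := hr (f, t)
          grind
        have key2 : ∀ t, (c, t) ∈ insert (c, u) (insert (c, y) R0) → t = u ∨ t = y := by
          intro t ht
          simp only [Finset.mem_insert, Prod.mk.injEq] at ht
          have := hR0R (c, t)
          have := hce t
          grind
        rcases hI with ⟨a1, ha1, b1, hb1, a2, ha2, b2, hb2, h1, h2, h3⟩ |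
          ⟨b1, hb1, a1, ha1, b2, hb2, a2, ha2, h1, h2, h3⟩
        · have := key2 _ ha1; have := key2 _ ha2; have := key _ hb1; grind
        · have := key2 _ ha1; have := key2 _ ha2; have := key _ hb2; grind)
    convert this using 1
    ext ⟨p, q⟩
    have h1 := hR0R (p, q)
    have h2 := hce q
    have h3 := hR0R (c, q)
    simp only [mem_moveCol, Finset.mem_insert, Prod.mk.injEq]
    grind
  have s3 : LSS (insert (b - 1, u) (insert (b - 1, y) R0))
      (insert (b - 1, u + (y - u) / 2) (insert (b, u + (y - u) / 2)
        ((insert (b - 1, u) (insert (b - 1, y) R0)).erase (b - 1, u)))) := by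
    apply Relation.ReflTransGen.single
    refine Or.inr (Or.inr (Or.inr (Or.inl (Or.inr ⟨u, b - 1, b, (y - u) / 2, by linarith,
      by linarith, by simp, ?_, ?_, Or.inl ⟨?_, rfl⟩⟩))))
    · simp only [Finset.mem_insert, hR0, Finset.mem_erase, Prod.mk.injEq, ne_eq]; grind
    · intro t ht
      have h1 := hR0R (t, u)
      have h2 := hb (t, u)
      simp only [Finset.mem_insert, Prod.mk.injEq] at ht
      grind
    · rintro ⟨p, q⟩ hp
      have h1 := hR0R (p, q)
      have h2 := hr (p, q)
      simp only [Finset.mem_insert, Prod.mk.injEq] at hp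
      grind
  refine s1.trans (s2.trans (s3.trans (Relation.ReflTransGen.single ?_)))
  refine Or.inr (Or.inr (Or.inl ⟨b, y, b - 1, u + (y - u) / 2, by simp, ?_, ?_, ?_, ?_, ?_, ?_⟩))
  · simp only [if_true]; right; constructor <;> linarith
  · rintro ⟨p, q⟩ hp
    have h1 := hR0R (p, q)
    have h2 := hb (p, q)
    simp only [Finset.mem_insert, Prod.mk.injEq] at hp
    unfold strictlyBetween
    grind
  · rintro ⟨p, q⟩ hp
    have h1 := hR0R (p, q)
    have h2 := hr (p, q)
    simp only [Finset.mem_insert, Prod.mk.injEq] at hp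
    unfold strictlyBetween
    grind
  · rintro ⟨p, q⟩ hp
    have h1 := hR0R (p, q)
    have h2 := hb (p, q)
    simp only [Finset.mem_insert, Prod.mk.injEq] at hp
    grind
  · rintro ⟨p, q⟩ hp
    have h1 := hR0R (p, q)
    have h2 := hr (p, q)
    simp only [Finset.mem_insert, Prod.mk.injEq] at hp
    grind
  · ext ⟨p, q⟩
    have h1 : (p, q) ∈ R0 → p ≠ b - 1 := by
      intro h hp; exact hdR q (hp ▸ hR0R _ h)
    have h2 : (p, q) ∈ R0 → ¬ (p = b ∧ q = y) := by
      rintro h ⟨rfl, rfl⟩; exact hby (hR0R _ h)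
    have h3 : q = u → q ≠ y := by intro h; rw [h]; exact huy.ne
    simp only [Finset.mem_insert, Finset.mem_erase, Prod.mk.injEq, ne_eq]
    exact prop_aux _ _ _ _ _ _ h1 h2 h3

/-- the last transfer -/
theorem final (G : GRD) (a b u y : ℝ) (hba : b < a) (huy : u < y)
    (hay : (a, y) ∈ G) (hby : (b, y) ∉ G) (hu : ∀ p ∈ G, p.2 ≠ u)
    (honly : ∀ z, (a, z) ∈ G → z = y)
    (hb : ∀ p ∈ G, b ≤ p.1) (hr : ∀ p ∈ G, ¬ (u < p.2 ∧ p.2 < y)) :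
    LSS (insert (b, u) (insert (a, u) G)) (moveCol G a b) := by
  have hdR : ∀ z, (b - 1, z) ∉ G := fun z hz => by have := hb _ hz; simp at this; linarith
  have s1 : LSS (insert (b, u) (insert (a, u) G))
      (insert (b - 1, u) (insert (b - 1, y) (insert (b, u) (G.erase (a, y))))) := by
    have := travel _ (insert (b, u) (insert (a, u) G)) a (b - 1) (by linarith) rfl
      ⟨(a, u), by simp, rfl⟩ (by
        rintro ⟨p, q⟩ hp
        have h2 := hdR q
        simp only [Finset.mem_insert, Prod.mk.injEq] at hp
        grind) (by
        intro f hf1 hf2 hI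
        have key : ∀ t, (f, t) ∈ (insert (b, u) (insert (a, u) G)) → ¬ (u < t ∧ t < y) := by
          intro t ht
          simp only [Finset.mem_insert, Prod.mk.injEq] at ht
          have := hr (f, t)
          grind
        have key2 : ∀ t, (a, t) ∈ (insert (b, u) (insert (a, u) G)) → t = u ∨ t = y := by
          intro t ht
          simp only [Finset.mem_insert, Prod.mk.injEq] at ht
          have := honly t
          grind
        rcases hI with ⟨a1, ha1, b1, hb1, a2, ha2, b2, hb2, h1, h2, h3⟩ |
          ⟨b1, hb1, a1, ha1, b2, hb2, a2, ha2, h1, h2, h3⟩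
        · have := key2 _ ha1; have := key2 _ ha2; have := key _ hb1; grind
        · have := key2 _ ha1; have := key2 _ ha2; have := key _ hb2; grind)
    convert this using 1
    ext ⟨p, q⟩
    have h1 := honly q
    simp only [mem_moveCol, Finset.mem_insert, Finset.mem_erase, Prod.mk.injEq, ne_eq]
    grind
  refine s1.trans (Relation.ReflTransGen.single ?_)
  have hm : moveCol G a b = insert (b, y) (G.erase (a, y)) := by
    ext ⟨p, q⟩
    have h1 := honly q
    simp only [mem_moveCol, Finset.mem_insert, Finset.mem_erase, Prod.mk.injEq, ne_eq]
    grind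
  rw [hm]
  refine Or.inr (Or.inr (Or.inl ⟨b, y, b - 1, u, by simp, ?_, ?_, ?_, ?_, ?_, ?_⟩))
  · simp only [if_true]; right; constructor <;> linarith
  · rintro ⟨p, q⟩ hp
    have h2 := hb (p, q)
    simp only [Finset.mem_insert, Finset.mem_erase, Prod.mk.injEq] at hp
    unfold strictlyBetween
    grind
  · rintro ⟨p, q⟩ hp
    have h2 := hr (p, q)
    simp only [Finset.mem_insert, Finset.mem_erase, Prod.mk.injEq] at hp
    unfold strictlyBetween
    grind
  · rintro ⟨p, q⟩ hp
    have h2 := hb (p, q)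
    simp only [Finset.mem_insert, Finset.mem_erase, Prod.mk.injEq] at hp
    grind
  · rintro ⟨p, q⟩ hp
    have h2 := hu (p, q)
    simp only [Finset.mem_insert, Finset.mem_erase, Prod.mk.injEq] at hp
    grind
  · ext ⟨p, q⟩
    simp only [Finset.mem_insert, Finset.mem_erase, Prod.mk.injEq, ne_eq]
    grind

theorem mainloop (a b : ℝ) (hba : b < a) (n : ℕ) : ∀ (G : GRD) (u : ℝ),
    (G.filter fun p => u < p.2).card = n →
    (∀ p ∈ G, b ≤ p.1 ∧ p.1 ≤ a) → (∀ p ∈ G, p.2 ≠ u) → (∃ y, (a, y) ∈ G) →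
    (∀ y, (a, y) ∈ G → u < y ∧ (b, y) ∉ G) →
    LSS (insert (b, u) (insert (a, u) G)) (moveCol G a b) := by
  induction n using Nat.strong_induction_on with
  | _ n ih =>
  intro G u hn hcol hu ⟨y0, hy0⟩ ha
  obtain ⟨q, hq, hmin⟩ := Finset.exists_min_image (G.filter fun p => u < p.2) Prod.snd
    ⟨(a, y0), by simp [hy0, (ha y0 hy0).1]⟩
  simp only [Finset.mem_filter] at hq hmin
  obtain ⟨hqG, huq⟩ := hq
  obtain ⟨q1, y⟩ := q
  dsimp only at huq hmin
  have hr : ∀ p ∈ G, ¬ (u < p.2 ∧ p.2 < y) := fun p hp h => by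
    have := hmin p ⟨hp, h.1⟩; linarith [h.2]
  -- the step when no vertex of column a is in the row y
  have adv : ∀ G' : GRD, (∀ p ∈ G', b ≤ p.1 ∧ p.1 ≤ a) → (∀ p ∈ G', p.2 ≠ u) →
      (∃ z, (a, z) ∈ G') → (∀ z, (a, z) ∈ G' → u < z ∧ (b, z) ∉ G') → (a, y) ∉ G' →
      (∃ x, (x, y) ∈ G') → (∀ p ∈ G', ¬ (u < p.2 ∧ p.2 < y)) →
      (G'.filter fun p => u < p.2).card = n →
      LSS (insert (b, u) (insert (a, u) G')) (moveCol G' a b) := by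
    intro G' hcol hu hex ha hay ⟨x, hx⟩ hr hn
    obtain ⟨v, hv1, -, hv3⟩ := gap (G'.image Prod.snd) y (y + 1) (by linarith)
    have hv3' : ∀ p ∈ G', ¬ (y < p.2 ∧ p.2 ≤ v) := fun p hp =>
      hv3 _ (Finset.mem_image_of_mem _ hp)
    have hlt : (G'.filter fun p => v < p.2).card < n := by
      rw [← hn]
      apply Finset.card_lt_card
      rw [Finset.ssubset_iff_of_subset]
      · exact ⟨(x, y), by simp [hx, huq], by simp; intros; linarith⟩
      · intro p; simp only [Finset.mem_filter]; grind
    have := ih _ hlt G' v rfl hcol (by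
        intro p hp hpv; exact hv3' p hp ⟨by linarith, hpv.le⟩) hex (by
        intro z hz
        have h1 := ha z hz
        have h2 := hr _ hz
        have h3 := hv3' _ hz
        refine ⟨?_, h1.2⟩
        grind)
    refine Relation.ReflTransGen.trans ?_ this
    have := pass_row (insert (b, u) (insert (a, u) G')) u y v (Or.inl ⟨huq, hv1⟩)
      ⟨(b, u), by simp, rfl⟩ ⟨(x, y), by simp [hx], rfl⟩ (by
        intro hI
        have key : ∀ t, (t, y) ∈ insert (b, u) (insert (a, u) G') → b ≤ t ∧ t ≤ a := by
          intro t ht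
          simp only [Finset.mem_insert, Prod.mk.injEq] at ht
          have := hcol (t, y)
          grind
        have key2 : ∀ t, (t, u) ∈ insert (b, u) (insert (a, u) G') → t = b ∨ t = a := by
          intro t ht
          simp only [Finset.mem_insert, Prod.mk.injEq] at ht
          have := hu (t, u)
          grind
        rcases hI with ⟨a1, ha1, b1, hb1, a2, ha2, b2, hb2, h1, h2, h3⟩ |
          ⟨b1, hb1, a1, ha1, b2, hb2, a2, ha2, h1, h2, h3⟩
        · have := key2 _ ha1; have := key2 _ ha2; have := key _ hb1; have := key _ hb2; grind
        · have := key2 _ ha1; have := key2 _ ha2; have := key _ hb1; have := key _ hb2; grind) (by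
        rintro ⟨p, q⟩ hp h1 h2
        have h3 := hr (p, q)
        have h4 := hv3' (p, q)
        simp only [Finset.mem_insert, Prod.mk.injEq] at hp
        grind)
    convert this using 1
    ext ⟨p, q⟩
    have h3 := hu (p, q)
    have h4 := hu (p, u)
    simp only [mem_moveRow, Finset.mem_insert, Prod.mk.injEq]
    grind
  by_cases hay : (a, y) ∈ G
  · by_cases honly : ∀ z, (a, z) ∈ G → z = y
    · exact final G a b u y hba huq hay (ha y hay).2 hu honly (fun p hp => (hcol p hp).1) hr
    · push Not at honly
      obtain ⟨z, hz, hzy⟩ := honly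
      have hbyG := (ha y hay).2
      have s1 := transfer (insert (b, u) (insert (a, u) G)) a b u y hba huq (by simp) (by simp)
        (by simp [hay]) (by
          simp only [Finset.mem_insert, Prod.mk.injEq]; grind) (by
          rintro ⟨p, q⟩ hp
          have := hcol (p, q)
          simp only [Finset.mem_insert, Prod.mk.injEq] at hp
          grind) (by
          rintro ⟨p, q⟩ hp
          have := hr (p, q)
          simp only [Finset.mem_insert, Prod.mk.injEq] at hp
          grind)
      have e1 : insert (b, y) ((insert (b, u) (insert (a, u) G)).erase (a, y)) =
          insert (b, u) (insert (a, u) (insert (b, y) (G.erase (a, y)))) := by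
        ext ⟨p, q⟩
        simp only [Finset.mem_insert, Finset.mem_erase, Prod.mk.injEq, ne_eq]
        grind
      have e2 : moveCol G a b = moveCol (insert (b, y) (G.erase (a, y))) a b := by
        ext ⟨p, q⟩
        simp only [mem_moveCol, Finset.mem_insert, Finset.mem_erase, Prod.mk.injEq, ne_eq]
        grind
      rw [e1] at s1
      rw [e2]
      refine s1.trans (adv _ ?_ ?_ ⟨z, ?_⟩ ?_ ?_ ⟨b, by simp⟩ ?_ ?_)
      · rintro ⟨p, q⟩ hp
        have := hcol (p, q)
        simp only [Finset.mem_insert, Finset.mem_erase, Prod.mk.injEq] at hp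
        grind
      · rintro ⟨p, q⟩ hp
        have := hu (p, q)
        simp only [Finset.mem_insert, Finset.mem_erase, Prod.mk.injEq] at hp
        grind
      · simp [hz, hzy]
      · intro z hz
        have := ha z
        simp only [Finset.mem_insert, Finset.mem_erase, Prod.mk.injEq] at hz ⊢
        grind
      · simp; intro h; linarith
      · rintro ⟨p, q⟩ hp
        have := hr (p, q)
        simp only [Finset.mem_insert, Finset.mem_erase, Prod.mk.injEq] at hp
        grind
      · rw [← hn, Finset.filter_insert, if_pos huq, Finset.filter_erase,
          Finset.card_insert_of_notMem (by simp [hbyG]),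
          Finset.card_erase_add_one (by simp [hay, huq])]
  · exact adv G hcol hu ⟨y0, hy0⟩ ha hay ⟨q1, hqG⟩ hr hn

theorem colRL (R : GRD) (a b : ℝ) (h : ∃ p ∈ R, p.1 = a) (ha : ∀ p ∈ R, p.1 ≤ a)
    (hb : ∀ p ∈ R, b < p.1) : LSS R (moveCol R a b) := by
  obtain ⟨⟨a', y0⟩, hy0, rfl⟩ := h
  dsimp only at *
  obtain ⟨u, hu⟩ : ∃ u, ∀ p ∈ R, u < p.2 := by
    obtain ⟨q, -, hq⟩ := Finset.exists_min_image R Prod.snd ⟨_, hy0⟩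
    exact ⟨q.2 - 1, fun p hp => by have := hq p hp; linarith⟩
  have hba : b < a' := hb _ hy0
  have s1 : LSS R (insert (a', u) R) := by
    apply Relation.ReflTransGen.single
    refine Or.inr (Or.inr (Or.inr (Or.inr (Or.inl ⟨(a', u), ?_, rfl, Or.inl ⟨⟨_, hy0, rfl⟩, ?_⟩⟩))))
    · intro h; exact lt_irrefl _ (hu _ h)
    · intro w hw; exact (hu w hw).ne'
  have s2 : LSS (insert (a', u) R) (insert (b, u) (insert (a', u) R)) := by
    apply Relation.ReflTransGen.single
    have hk : ∀ w ∈ insert (a', u) R, w.1 ≠ b := by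
      intro w hw
      rcases Finset.mem_insert.1 hw with rfl | hw
      · exact hba.ne'
      · exact (hb w hw).ne'
    refine Or.inr (Or.inr (Or.inr (Or.inr (Or.inl ⟨(b, u), ?_, rfl,
      Or.inr ⟨⟨(a', u), by simp, rfl⟩, hk⟩⟩))))
    intro h; exact hk _ h rfl
  refine s1.trans (s2.trans (mainloop a' b hba _ R u rfl ?_ ?_ ⟨_, hy0⟩ ?_))
  · intro p hp; exact ⟨(hb p hp).le, ha p hp⟩
  · intro p hp; exact (hu p hp).ne'
  · intro y hy; exact ⟨hu _ hy, fun h => lt_irrefl _ (hb _ h)⟩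

theorem colAll (R : GRD) (a b : ℝ) (h : ∃ p ∈ R, p.1 = a)
    (hab : ((∀ p ∈ R, p.1 ≤ a) ∧ ∀ p ∈ R, b < p.1) ∨
     ((∀ p ∈ R, a ≤ p.1) ∧ ∀ p ∈ R, p.1 < b)) : LSS R (moveCol R a b) := by
  rcases hab with ⟨h1, h2⟩ | ⟨h1, h2⟩
  · exact colRL R a b h h1 h2
  · obtain ⟨⟨x, y⟩, hp, rfl⟩ := h
    have := LSS_NN (colRL (NN R) (-x) (-b) ⟨(-x, -y), by simpa [mem_NN] using hp, rfl⟩ (by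
      rintro ⟨p, q⟩ hp; have := h1 _ ((mem_NN _ _ _).1 hp); dsimp at *; linarith) (by
      rintro ⟨p, q⟩ hp; have := h2 _ ((mem_NN _ _ _).1 hp); dsimp at *; linarith))
    rw [NN_NN] at this
    convert this using 1
    ext ⟨p, q⟩; simp [mem_NN, mem_moveCol]

/-- a cyclic permutation is a combination of finitely many commutations,
stabilizations of type L, destabilizations of type L, end shifts of type L and vertex
additions. -/
theorem statement5 (R R' : GRD) (h : CyclicPermutation R R') :
    Relation.ReflTransGen (fun A B : GRD =>
      Commutation A B ∨ Stab true A B ∨ Stab true B A ∨ EndShift true A B ∨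
        VertexAddition A B ∨ CombEquiv A B) R R' := by
  change LSS R R'
  rcases h with ⟨a, b, h, hab, rfl⟩ | ⟨a, b, h, hab, rfl⟩
  · exact colAll R a b h hab
  · obtain ⟨⟨x, y⟩, hp, rfl⟩ := h
    have := LSS_TT (colAll (TT R) y b ⟨(y, x), by simpa [mem_TT] using hp, rfl⟩ (by
      rcases hab with ⟨h1, h2⟩ | ⟨h1, h2⟩
      · left; exact ⟨fun p hp => h1 _ ((mem_TT _ _ _).1 hp), fun p hp => h2 _ ((mem_TT _ _ _).1 hp)⟩
      · right; exact ⟨fun p hp => h1 _ ((mem_TT _ _ _).1 hp), fun p hp => h2 _ ((mem_TT _ _ _).1 hp)⟩))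
    rw [TT_TT] at this
    convert this using 1
    ext ⟨p, q⟩; simp [mem_TT, mem_moveCol, mem_moveRow]

end RectDiag
end
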